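/- arXiv:math/0611893 — 3 statements merged into one kernel-verified Lean document; each statement's English description precedes it below -/
import Mathlib

section
/- Let A(t) = c + Σ_{j=1}^k a_j sin((2j−1)t) + Σ_{j=1}^k b_j cos((2j−1)t) be a raked trigonometric polynomial, viewed as a function A : S¹ → ℝ, which is not identically zero. Suppose A has 2k distinct roots in an arc Ω ⊂ S¹ of length less than π. Then every other root of A on S¹ lies in the antipodal arc Ω + π. -/
open Real

/-- The symmetric moment curve `SM_{2k} : ℝ → ℝ^{2k}`,
`SM_{2k}(t) = (cos t, sin t, cos 3t, sin 3t, …, cos (2k-1)t, sin (2k-1)t)`. -/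
noncomputable def SM (k : ℕ) (t : ℝ) : EuclideanSpace ℝ (Fin (2 * k)) :=
  WithLp.toLp 2 fun i => if i.1 % 2 = 0 then Real.cos ((2 * (i.1 / 2) + 1) * t)
           else Real.sin ((2 * (i.1 / 2) + 1) * t)

/-- `B_{2k}`, the convex hull of the symmetric moment curve. -/
noncomputable def B (k : ℕ) : Set (EuclideanSpace ℝ (Fin (2 * k))) :=
  convexHull ℝ (Set.range (SM k))

/-- The length of the shorter arc between the points of `S¹ = ℝ/2πℤ`
represented by `s` and `t`. -/
noncomputable def arcDist (s t : ℝ) : ℝ :=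
  dist (s : AddCircle (2 * π)) (t : AddCircle (2 * π))

/-- The raked trigonometric polynomial of degree `2k-1` with constant term `c`
and coefficients `a j`, `b j` on `sin (2j-1)t`, `cos (2j-1)t`. -/
noncomputable def rakedTrig (k : ℕ) (c : ℝ) (a b : Fin k → ℝ) (t : ℝ) : ℝ :=
  c + (∑ j : Fin k, a j * Real.sin ((2 * (j : ℕ) + 1) * t))
    + (∑ j : Fin k, b j * Real.cos ((2 * (j : ℕ) + 1) * t))

/-!
The derivative of `A` has no constant term, so multiplied by `e ^ ((2k - 1)it)` it is a polynomial
of degree at most `2k - 1` in `e ^ (2it)`; unless it vanishes identically, it has fewer than `2k`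
roots modulo `π`. Rolle's theorem puts its roots strictly between those of `A`, so a nonzero `A` has
at most `2k` roots in a closed half-circle. Any point outside `Ω + π` shares a closed half-circle
with `Ω`.
-/

/-- The complex polynomial `P` of degree at most `2k - 1` such that `P (e ^ (2it))` equals
`e ^ ((2k - 1)it)` times the raked trigonometric polynomial with zero constant term and
coefficients `a`, `b`. -/
noncomputable def rakedPolynomial (k : ℕ) (a b : Fin k → ℝ) : Polynomial ℂ :=
  ∑ j : Fin k, (Polynomial.monomial (k + j) ((b j - a j * Complex.I) / 2) +
    Polynomial.monomial (k - 1 - j) ((b j + a j * Complex.I) / 2))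

section RakedTrig

open Finset Set

theorem exists_finset_Ioo_deriv_eq_zero {f : ℝ → ℝ} {p q y : ℝ} {S : Finset ℝ}
    (hf : ContinuousOn f (Icc p q)) (hS : ↑S ⊆ Icc p q) (hfS : ∀ x ∈ S, f x = y) :
    ∃ T : Finset ℝ, #S ≤ #T + 1 ∧ ∀ x ∈ T, x ∈ Ioo p q ∧ deriv f x = 0 := by
  have rolle : ∀ u ∈ S, ∀ v ∈ S, u < v → ∃ w ∈ Ioo u v, deriv f w = 0 := fun u hu v hv huv ↦
    exists_deriv_eq_zero huv (hf.mono (Icc_subset_Icc (hS hu).1 (hS hv).2))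
      ((hfS u hu).trans (hfS v hv).symm)
  choose! g hg_mem hg_deriv using rolle
  refine ⟨((S ×ˢ S).filter fun uv ↦ uv.1 < uv.2).image fun uv ↦ g uv.1 uv.2, ?_, ?_⟩
  · refine card_le_of_interleaved fun u hu v hv huv _ ↦ ⟨g u v, ?_, hg_mem u hu v hv huv⟩
    exact mem_image.2 ⟨(u, v), by simp [hu, hv, huv], rfl⟩
  · intro x hx
    obtain ⟨⟨u, v⟩, huv, rfl⟩ := mem_image.1 hx
    simp only [mem_filter, mem_product] at huv
    obtain ⟨⟨hu, hv⟩, huv⟩ := huv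
    exact ⟨Ioo_subset_Ioo (hS hu).1 (hS hv).2 (hg_mem u hu v hv huv), hg_deriv u hu v hv huv⟩

variable {k : ℕ} {c₀ : ℝ} {a b : Fin k → ℝ}

theorem hasDerivAt_rakedTrig (t : ℝ) :
    HasDerivAt (rakedTrig k c₀ a b)
      (rakedTrig k 0 (fun j ↦ -((2 * (j : ℕ) + 1) * b j)) (fun j ↦ (2 * (j : ℕ) + 1) * a j) t)
      t := by
  have angle (j : Fin k) :
      HasDerivAt (fun t : ℝ ↦ (2 * (j : ℕ) + 1) * t) (2 * (j : ℕ) + 1) t := by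
    simpa using (hasDerivAt_id t).const_mul (2 * ((j : ℕ) : ℝ) + 1)
  have sin_part := HasDerivAt.fun_sum (u := univ)
    fun (j : Fin k) _ ↦ (angle j).sin.const_mul (a j)
  have cos_part := HasDerivAt.fun_sum (u := univ)
    fun (j : Fin k) _ ↦ (angle j).cos.const_mul (b j)
  refine ((sin_part.const_add c₀).add cos_part).congr_deriv ?_
  rw [rakedTrig, zero_add, add_comm]
  congr 1 <;> exact sum_congr rfl fun j _ ↦ by ring

theorem rakedTrig_periodic : Function.Periodic (rakedTrig k c₀ a b) (2 * π) := by
  intro t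
  have angle (j : ℕ) : (2 * (j : ℝ) + 1) * (t + 2 * π) =
      (2 * (j : ℝ) + 1) * t + ((2 * j + 1 : ℕ) : ℝ) * (2 * π) := by
    push_cast; ring
  simp only [rakedTrig, angle, Real.sin_add_nat_mul_two_pi, Real.cos_add_nat_mul_two_pi]

theorem rakedPolynomial_degree_lt : (rakedPolynomial k a b).degree < (2 * k : ℕ) := by
  rw [← Polynomial.mem_degreeLT]
  refine Submodule.sum_mem _ fun j _ ↦ Submodule.add_mem _ ?_ ?_
  all_goals
    rw [Polynomial.mem_degreeLT]
    refine (Polynomial.degree_monomial_le _ _).trans_lt ?_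
    exact_mod_cast (by omega)

theorem rakedPolynomial_eval_exp (t : ℝ) :
    (rakedPolynomial k a b).eval (Complex.exp (2 * t * Complex.I)) =
      Complex.exp ((2 * k - 1) * t * Complex.I) * (rakedTrig k 0 a b t : ℝ) := by
  rw [rakedPolynomial, rakedTrig, Polynomial.eval_finsetSum, zero_add, ← sum_add_distrib]
  push_cast
  rw [mul_sum]
  refine sum_congr rfl fun j _ ↦ ?_
  set θ : ℂ := (2 * (j : ℕ) + 1) * t
  have exp_high : Complex.exp (2 * t * Complex.I) ^ (k + j : ℕ) =
      Complex.exp ((2 * k - 1) * t * Complex.I) * Complex.exp (θ * Complex.I) := by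
    rw [← Complex.exp_nat_mul, ← Complex.exp_add]
    simp only [θ]
    push_cast
    ring_nf
  have exp_low : Complex.exp (2 * t * Complex.I) ^ (k - 1 - j : ℕ) =
      Complex.exp ((2 * k - 1) * t * Complex.I) * Complex.exp (-θ * Complex.I) := by
    have cast_low : ((k - 1 - j : ℕ) : ℂ) = k - 1 - (j : ℕ) := by
      rw [Nat.sub_sub, Nat.cast_sub (by omega), Nat.cast_add, Nat.cast_one, sub_sub]
    rw [← Complex.exp_nat_mul, ← Complex.exp_add, cast_low]
    simp only [θ]
    ring_nf
  rw [Polynomial.eval_add, Polynomial.eval_monomial, Polynomial.eval_monomial, exp_high, exp_low,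
    Complex.cos, Complex.sin]
  ring

theorem rakedTrig_const_zero_eq_zero_of_two_mul_le_card {S : Finset ℝ} (hcard : 2 * k ≤ #S)
    (hS : InjOn ((↑) : ℝ → AddCircle π) S) (hroots : ∀ x ∈ S, rakedTrig k 0 a b x = 0) :
    rakedTrig k 0 a b = 0 := by
  have toCircle_eq (t : ℝ) :
      (AddCircle.toCircle (t : AddCircle π) : ℂ) = Complex.exp (2 * t * Complex.I) := by
    rw [AddCircle.toCircle_apply_mk, Circle.coe_exp, mul_div_cancel_right₀ _ pi_ne_zero]
    push_cast
    rfl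
  have exp_injOn : InjOn (fun x : ℝ ↦ Complex.exp (2 * x * Complex.I)) S := by
    simp only [← toCircle_eq]
    exact (Circle.coe_injective.comp (AddCircle.injective_toCircle pi_ne_zero)).comp_injOn hS
  have polynomial_eq_zero : rakedPolynomial k a b = 0 :=
    Polynomial.eq_zero_of_degree_lt_of_eval_index_eq_zero _ exp_injOn
      (rakedPolynomial_degree_lt.trans_le (by exact_mod_cast hcard))
      fun x hx ↦ by rw [rakedPolynomial_eval_exp, hroots x hx, Complex.ofReal_zero, mul_zero]
  ext t
  have eval_eq := rakedPolynomial_eval_exp (a := a) (b := b) t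
  rw [polynomial_eq_zero, Polynomial.eval_zero, zero_eq_mul] at eval_eq
  exact_mod_cast eval_eq.resolve_left (Complex.exp_ne_zero _)

theorem rakedTrig_eq_zero_of_two_mul_lt_card {p : ℝ} {S : Finset ℝ} (hcard : 2 * k < #S)
    (hS : ↑S ⊆ Icc p (p + π)) (hroots : ∀ x ∈ S, rakedTrig k c₀ a b x = 0) :
    rakedTrig k c₀ a b = 0 := by
  have : Fact (0 < π) := ⟨pi_pos⟩
  have hdiff : Differentiable ℝ (rakedTrig k c₀ a b) := fun x ↦
    (hasDerivAt_rakedTrig x).differentiableAt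
  have hderiv : deriv (rakedTrig k c₀ a b) = _ := funext fun x ↦ (hasDerivAt_rakedTrig x).deriv
  obtain ⟨T, hST, hT⟩ :=
    exists_finset_Ioo_deriv_eq_zero hdiff.continuous.continuousOn hS hroots
  have hT_inj : InjOn ((↑) : ℝ → AddCircle π) T := fun x hx y hy ↦
    (AddCircle.coe_eq_coe_iff_of_mem_Ico (Ioo_subset_Ico_self (hT x hx).1)
      (Ioo_subset_Ico_self (hT y hy).1)).1
  have deriv_eq_zero : deriv (rakedTrig k c₀ a b) = 0 := by
    rw [hderiv] at hT ⊢
    exact rakedTrig_const_zero_eq_zero_of_two_mul_le_card (by omega) hT_inj fun x hx ↦ (hT x hx).2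
  obtain ⟨x, hx⟩ : S.Nonempty := card_pos.1 (by omega)
  ext t
  rw [is_const_of_deriv_eq_zero hdiff (congrFun deriv_eq_zero) t x, hroots x hx, Pi.zero_apply]

variable {S : Finset ℝ} {s : ℝ}

theorem notMem_Icc_of_rakedTrig_eq_zero {p : ℝ} (hA : rakedTrig k c₀ a b ≠ 0)
    (hcard : 2 * k ≤ #S) (hS : ↑S ⊆ Icc p (p + π)) (hroots : ∀ x ∈ S, rakedTrig k c₀ a b x = 0)
    (hs : rakedTrig k c₀ a b s = 0) (hsS : s ∉ S) : s ∉ Icc p (p + π) := by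
  intro hs_mem
  refine hA (rakedTrig_eq_zero_of_two_mul_lt_card (p := p) (S := insert s S) ?_ ?_ ?_)
  · rw [card_insert_of_notMem hsS]
    exact Nat.lt_succ_of_le hcard
  · rw [coe_insert]
    exact insert_subset hs_mem hS
  · exact (Finset.forall_mem_insert _ _ _).2 ⟨hs, hroots⟩

theorem sub_pi_mem_Icc_of_rakedTrig_eq_zero {c L : ℝ} (hA : rakedTrig k c₀ a b ≠ 0) (hL : L ≤ π)
    (hcard : 2 * k ≤ #S) (hS : ↑S ⊆ Icc c (c + L)) (hroots : ∀ x ∈ S, rakedTrig k c₀ a b x = 0)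
    (hs : rakedTrig k c₀ a b s = 0) (hsS : s ∉ S) (hs_mem : s ∈ Ico c (c + 2 * π)) :
    s - π ∈ Icc c (c + L) := by
  refine ⟨?_, ?_⟩ <;> by_contra! hlt
  · have hS' : ↑S ⊆ Icc c (c + π) := hS.trans (Icc_subset_Icc_right (by linarith))
    exact notMem_Icc_of_rakedTrig_eq_zero hA hcard hS' hroots hs hsS ⟨hs_mem.1, by linarith⟩
  · have hS' : ↑S ⊆ Icc (s - 2 * π) (s - 2 * π + π) :=
      hS.trans (Icc_subset_Icc (by linarith [hs_mem.2]) (by linarith))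
    have hs' : rakedTrig k c₀ a b (s - 2 * π) = 0 := by rw [rakedTrig_periodic.sub_eq, hs]
    have hsS' : s - 2 * π ∉ S := fun h ↦ by linarith [(hS h).1, hs_mem.2]
    exact notMem_Icc_of_rakedTrig_eq_zero hA hcard hS' hroots hs' hsS'
      ⟨le_rfl, by linarith [pi_pos]⟩

end RakedTrig

theorem stmt_15_general (k : ℕ) (c₀ : ℝ) (a b : Fin k → ℝ)
    (hA : ∃ t, rakedTrig k c₀ a b t ≠ 0) (c L : ℝ) (hL : L ≤ π)
    (t : Fin (2 * k) → ℝ) (ht : ∀ i, t i ∈ Set.Icc c (c + L)) (htinj : Function.Injective t)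
    (hroots : ∀ i, rakedTrig k c₀ a b (t i) = 0)
    (s : ℝ) (hs : rakedTrig k c₀ a b s = 0)
    (hst : ∀ i, (s : AddCircle (2 * π)) ≠ (t i : AddCircle (2 * π))) :
    ∃ r ∈ Set.Icc c (c + L),
      (s : AddCircle (2 * π)) = ((r + π : ℝ) : AddCircle (2 * π)) := by
  have : Fact (0 < 2 * π) := ⟨two_pi_pos⟩
  obtain ⟨s', hs'_mem, hs's⟩ :=
    (AddCircle.coe_image_Ico_eq (2 * π) c).ge (Set.mem_univ (s : AddCircle (2 * π)))
  have hs' : rakedTrig k c₀ a b s' = 0 :=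
    (congrArg rakedTrig_periodic.lift hs's).trans hs
  refine ⟨s' - π, ?_, by rw [sub_add_cancel, hs's]⟩
  refine sub_pi_mem_Icc_of_rakedTrig_eq_zero (S := Finset.univ.map ⟨t, htinj⟩)
    (Function.ne_iff.2 hA) hL ?_ ?_ ?_ hs' ?_ hs'_mem
  · simp
  · simpa [Set.range_subset_iff] using ht
  · simpa using hroots
  · intro h
    obtain ⟨i, -, rfl⟩ := Finset.mem_map.1 h
    exact hst i hs's.symm

/-- Lemma 6.3: if a nonzero raked trigonometric polynomial has `2k` distinct roots in an
arc `Ω` of `S¹` of length less than `π`, then any other root on `S¹` lies in the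
antipodal arc `Ω + π`. -/
theorem stmt_15 (k : ℕ) (hk : 0 < k) (c₀ : ℝ) (a b : Fin k → ℝ)
    (hA : ∃ t, rakedTrig k c₀ a b t ≠ 0)
    (c L : ℝ) (hL0 : 0 ≤ L) (hLπ : L < π)
    (t : Fin (2 * k) → ℝ)
    (ht : ∀ i, t i ∈ Set.Icc c (c + L))
    (htinj : Function.Injective fun i => ((t i : ℝ) : AddCircle (2 * π)))
    (hroots : ∀ i, rakedTrig k c₀ a b (t i) = 0)
    (s : ℝ) (hs : rakedTrig k c₀ a b s = 0)
    (hsout : ¬ ∃ r ∈ Set.Icc c (c + L),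
      ((s : AddCircle (2 * π)) = ((r : ℝ) : AddCircle (2 * π)))) :
    ∃ r ∈ Set.Icc c (c + L),
      ((s : AddCircle (2 * π)) = ((r + π : ℝ) : AddCircle (2 * π))) := by
  exact stmt_15_general k c₀ a b hA c L hLπ.le t ht htinj.of_comp hroots s hs
    fun i hi ↦ hsout ⟨t i, ht i, hi⟩
end

section
/- Fix a positive even integer d = 2k and an integer j with k ≤ j < 2k. Then there exist constants γ_j(d) > 0 and Γ_j(d) > 0 and an integer N such that for every even n ≥ N, γ_j(d)·n^k ≤ fmax(d,n;j) ≤ Γ_j(d)·n^k. Equivalently, γ_j(d) + o(1) ≤ fmax(d,n;j)/C(n,k) ≤ Γ_j(d) + o(1) as n → ∞. -/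
open Real

/-- A centrally symmetric polytope in `ℝ^d`: the convex hull of a finite set,
satisfying `P = -P`. -/
def IsCSPolytope {d : ℕ} (P : Set (EuclideanSpace ℝ (Fin d))) : Prop :=
  (∃ V : Finset (EuclideanSpace ℝ (Fin d)), P = convexHull ℝ (V : Set (EuclideanSpace ℝ (Fin d)))) ∧
  P = -P

/-- The number of `j`-dimensional faces of `P`, a face being the intersection of `P`
with a supporting hyperplane, i.e. a nonempty exposed face. -/
noncomputable def faceCount {d : ℕ} (P : Set (EuclideanSpace ℝ (Fin d))) (j : ℕ) : ℕ :=
  Set.ncard {F : Set (EuclideanSpace ℝ (Fin d)) |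
    IsExposed ℝ P F ∧ F.Nonempty ∧ Module.finrank ℝ (vectorSpan ℝ F) = j}

/-- `fmax d n j`: the maximum number of `j`-faces of a `d`-dimensional centrally
symmetric polytope in `ℝ^d` with exactly `n` vertices. -/
noncomputable def fmax (d n j : ℕ) : ℕ :=
  sSup {m : ℕ | ∃ P : Set (EuclideanSpace ℝ (Fin d)),
    IsCSPolytope P ∧ affineSpan ℝ P = ⊤ ∧
    (Set.extremePoints ℝ P).ncard = n ∧ faceCount P j = m}

/-!
*Upper bound.* Lifting the `n` vertices `v` of a `d`-polytope to the vectors `(v, 1)` turns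
supporting hyperplanes into points `l` of the dual polyhedron `{l | ∀ i, l (f i) ≤ 0}` of these
vectors, in a space of dimension `D = d + 1`. Replacing the heights `0` by generic `ω i` makes the
polyhedron simple, and every face of the polytope is still spanned by some of the vectors that are
tight at a vertex of the new polyhedron; as `D` vectors are tight there, it suffices to count
vertices. Expand a generic vector `u` in the tight basis at a vertex: at most `D / 2` coefficients
are positive or at most `D / 2` are negative. Say the former; then the vertex is the unique
minimiser of `l u` among the points of the polyhedron that are tight at the indices with positive
coefficient, so these at most `D / 2` indices determine it. Hence there are `O(n ^ (D / 2))`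
vertices, and `D / 2 = k` for `d = 2 * k`.

*Lower bound.* In the free sum of `k` centrally symmetric polygons with `n / k` vertices each, the
joins of one proper face from each polygon are faces. Choosing an edge in `j + 1 - k` of the
polygons and a vertex in the others gives `j`-faces, about `(n / k) ^ k` many. The polygons are
spanned by points with integral parameters on a parabola and their antipodes, so that edges are the
chords between consecutive integers.
-/

theorem ncard_setOf_card_le (ι : Type*) [Fintype ι] (m : ℕ) :
    {s : Finset ι | s.card ≤ m}.ncard ≤ (Fintype.card ι + 1) ^ m := by
  have hinj : Set.InjOn (fun (s : Finset ι) (i : Fin m) ↦ s.toList[(i : ℕ)]?)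
      {s : Finset ι | s.card ≤ m} := by
    intro s hs t ht heq
    rw [Set.mem_ofPred_eq, ← Finset.length_toList] at hs ht
    refine Finset.val_injective ?_
    rw [← s.coe_toList, ← t.coe_toList]
    refine congrArg _ (List.ext_getElem? fun i ↦ ?_)
    rcases lt_or_ge i m with hi | hi
    · exact congrFun heq ⟨i, hi⟩
    · rw [List.getElem?_eq_none (hs.trans hi), List.getElem?_eq_none (ht.trans hi)]
  simpa using Set.ncard_le_ncard_of_injOn (t := Set.univ) _ (fun _ _ ↦ Set.mem_univ _) hinj

section DualPolyhedron

variable {𝕜 W ι : Type*} [Field 𝕜] [AddCommGroup W] [Module 𝕜 W] {f : ι → W} {ω : ι → 𝕜}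

/-- The constraints among `l (f i) ≤ ω i` that the functional `l` satisfies with equality. -/
def tightSet (f : ι → W) (ω : ι → 𝕜) (l : Module.Dual 𝕜 W) : Set ι :=
  {i | l (f i) = ω i}

/-- Right-hand sides for which the polyhedron `{l | ∀ i, l (f i) ≤ ω i}` is simple: constraints
that can be tight together are independent. -/
def IsGenericHeight (f : ι → W) (ω : ι → 𝕜) : Prop :=
  ∀ l : Module.Dual 𝕜 W, LinearIndepOn 𝕜 f (tightSet f ω l)

variable (𝕜) in
/-- A vector on none of the proper subspaces spanned by members of the family `f`. -/
def IsGenericVector (f : ι → W) (u : W) : Prop :=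
  ∀ S : Set ι, u ∈ Submodule.span 𝕜 (f '' S) → Submodule.span 𝕜 (f '' S) = ⊤

theorem exists_forall_notMem_of_ne_top [Infinite 𝕜] {κ : Type*} [Finite κ]
    (p : κ → Subspace 𝕜 W) (hp : ∀ i, p i ≠ ⊤) : ∃ x, ∀ i, x ∉ p i := by
  by_contra! hcover
  obtain ⟨i, hi⟩ := Subspace.exists_eq_top_of_iUnion_eq_univ (p := p)
    (Set.eq_univ_of_forall fun x ↦ Set.mem_iUnion.2 (hcover x))
  exact hp i hi

theorem exists_isGenericVector [Infinite 𝕜] [Finite ι] (f : ι → W) :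
    ∃ u, IsGenericVector 𝕜 f u := by
  obtain ⟨u, hu⟩ := exists_forall_notMem_of_ne_top
    (fun S : {S : Set ι // Submodule.span 𝕜 (f '' S) ≠ ⊤} ↦ Submodule.span 𝕜 (f '' S.1))
    fun S ↦ S.2
  exact ⟨u, fun S hS ↦ by_contra fun hne ↦ hu ⟨S, hne⟩ hS⟩

theorem exists_isGenericHeight [Infinite 𝕜] [Finite ι] (f : ι → W) :
    ∃ ω : ι → 𝕜, IsGenericHeight f ω := by
  have hrel (S : {S : Set ι // ¬ LinearIndepOn 𝕜 f S}) :
      ∃ c ∈ Finsupp.supported 𝕜 𝕜 S.1, Finsupp.linearCombination 𝕜 f c = 0 ∧ c ≠ 0 := by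
    simpa only [linearIndepOn_iff, not_forall, exists_prop] using S.2
  choose c hcS hc0 hc using hrel
  let relation (S) : Module.Dual 𝕜 (ι → 𝕜) := ∑ i ∈ (c S).support, c S i • LinearMap.proj i
  have relation_apply (S) (ω : ι → 𝕜) : relation S ω = ∑ i ∈ (c S).support, c S i * ω i := by
    simp [relation]
  obtain ⟨ω, hω⟩ := exists_forall_notMem_of_ne_top (fun S ↦ LinearMap.ker (relation S)) <| by
    intro S hker
    obtain ⟨i, hi⟩ := Finsupp.ne_iff.1 (hc S)
    classical
    have : relation S (Pi.single i 1) = 0 := by rw [LinearMap.ker_eq_top.1 hker]; rfl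
    exact hi (by simpa [relation_apply, Pi.single_apply] using this)
  refine ⟨ω, fun l ↦ by_contra fun hdep ↦ hω ⟨_, hdep⟩ ?_⟩
  have htight : ∀ i ∈ (c ⟨_, hdep⟩).support, l (f i) = ω i := fun i hi ↦ hcS ⟨_, hdep⟩ hi
  have hl := congrArg l (hc0 ⟨_, hdep⟩)
  simp only [Finsupp.linearCombination_apply, Finsupp.sum, map_sum, map_smul, smul_eq_mul,
    map_zero] at hl
  rw [LinearMap.mem_ker, relation_apply, ← hl]
  exact Finset.sum_congr rfl fun i hi ↦ by rw [htight i hi]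

variable [LinearOrder 𝕜]

/-- A vertex of the polyhedron `{l | ∀ i, l (f i) ≤ ω i}` in the dual space, given as a feasible
point whose tight constraints have full rank. -/
structure IsDualVertex (f : ι → W) (ω : ι → 𝕜) (l : Module.Dual 𝕜 W) : Prop where
  feasible : ∀ i, l (f i) ≤ ω i
  span_tightSet : Submodule.span 𝕜 (f '' tightSet f ω l) = ⊤

theorem IsDualVertex.tightSet_injOn : Set.InjOn (tightSet f ω) {l | IsDualVertex f ω l} := by
  intro l hl l' _ heq
  refine LinearMap.ext_on hl.span_tightSet ?_
  rintro _ ⟨i, hi, rfl⟩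
  have hi' : i ∈ tightSet f ω l' := heq ▸ hi
  exact Eq.trans hi hi'.symm

theorem finite_setOf_isDualVertex [Finite ι] : {l | IsDualVertex f ω l}.Finite :=
  Set.Finite.of_injOn (Set.mapsTo_univ _ _) IsDualVertex.tightSet_injOn Set.finite_univ

theorem IsDualVertex.exists_support_eq_tightSet {l : Module.Dual 𝕜 W} {u : W}
    (hl : IsDualVertex f ω l) (hω : IsGenericHeight f ω) (hu : IsGenericVector 𝕜 f u) :
    ∃ c : ι →₀ 𝕜, (c.support : Set ι) = tightSet f ω l ∧
      Finsupp.linearCombination 𝕜 f c = u := by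
  obtain ⟨c, hc, rfl⟩ := (Finsupp.mem_span_image_iff_linearCombination 𝕜).1
    (hl.span_tightSet.symm ▸ Submodule.mem_top : u ∈ Submodule.span 𝕜 (f '' tightSet f ω l))
  refine ⟨c, Set.Subset.antisymm hc fun i hi ↦ by_contra fun hic ↦ ?_, rfl⟩
  have hspan : Submodule.span 𝕜 (f '' c.support) = ⊤ := hu _ <|
    (Finsupp.mem_span_image_iff_linearCombination 𝕜).2 ⟨c, fun _ h ↦ h, rfl⟩
  exact ((hω l).mono (Set.insert_subset hi hc)).notMem_span_of_insert hic
    (hspan ▸ Submodule.mem_top)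

theorem IsDualVertex.ncard_tightSet {l : Module.Dual 𝕜 W} (hl : IsDualVertex f ω l)
    (hω : IsGenericHeight f ω) : (tightSet f ω l).ncard = Module.finrank 𝕜 W := by
  have hspan : ⊤ ≤ Submodule.span 𝕜 (Set.range fun i : tightSet f ω l ↦ f i) := by
    rw [← Set.image_eq_range, hl.span_tightSet]
  exact (Module.finrank_eq_nat_card_basis (Module.Basis.mk (hω l) hspan)).symm

variable [IsStrictOrderedRing 𝕜]

-- A vertex minimises evaluation at `u` over the face cut out by the constraints on which `u`
-- has a positive coefficient, and it is the only minimiser.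
theorem IsDualVertex.eq_of_apply_le {l l' : Module.Dual 𝕜 W} {c : ι →₀ 𝕜}
    (hl : IsDualVertex f ω l) (hc : (c.support : Set ι) = tightSet f ω l)
    (hl' : ∀ i, l' (f i) ≤ ω i) (hpos : ∀ i, 0 < c i → l' (f i) = ω i)
    (hle : l' (Finsupp.linearCombination 𝕜 f c) ≤ l (Finsupp.linearCombination 𝕜 f c)) :
    l' = l := by
  have htight (i) (hi : i ∈ c.support) : l (f i) = ω i := hc.subset hi
  have hterm (i) (_ : i ∈ c.support) : 0 ≤ c i * (l' (f i) - ω i) := by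
    rcases lt_or_ge 0 (c i) with hi | hi
    · simp [hpos i hi]
    · exact mul_nonneg_of_nonpos_of_nonpos hi (sub_nonpos.2 (hl' i))
  have hsum : ∑ i ∈ c.support, c i * (l' (f i) - ω i) ≤ 0 := by
    rw [Finset.sum_congr rfl fun i hi ↦ by rw [← htight i hi]]
    simpa [Finsupp.linearCombination_apply, Finsupp.sum, mul_sub] using hle
  have hzero := (Finset.sum_eq_zero_iff_of_nonneg hterm).1
    (hsum.antisymm (Finset.sum_nonneg hterm))
  refine LinearMap.ext_on hl.span_tightSet ?_
  rintro _ ⟨i, hi, rfl⟩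
  rw [← hc, Finset.mem_coe] at hi
  rw [htight i hi]
  exact sub_eq_zero.1 ((mul_eq_zero.1 (hzero i hi)).resolve_left (Finsupp.mem_support_iff.1 hi))

theorem injOn_filter_pos_of_isDualVertex {A : Set (Module.Dual 𝕜 W)} {u : W}
    {c : Module.Dual 𝕜 W → ι →₀ 𝕜} (hA : ∀ l ∈ A, IsDualVertex f ω l)
    (hc : ∀ l ∈ A, ((c l).support : Set ι) = tightSet f ω l)
    (hu : ∀ l ∈ A, Finsupp.linearCombination 𝕜 f (c l) = u) :
    Set.InjOn (fun l ↦ {i ∈ (c l).support | 0 < c l i}) A := by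
  have eq_of_apply_le : ∀ l ∈ A, ∀ l' ∈ A,
      {i ∈ (c l).support | 0 < c l i} = {i ∈ (c l').support | 0 < c l' i} →
      l' u ≤ l u → l' = l := by
    intro l hl l' hl' heq hle
    refine (hA l hl).eq_of_apply_le (hc l hl) (hA l' hl').feasible (fun i hi ↦ ?_) ?_
    · have hi' : i ∈ {i ∈ (c l').support | 0 < c l' i} := heq ▸ by simp [hi, hi.ne']
      exact (hc l' hl').subset (Finset.mem_filter.1 hi').1
    · rwa [hu l hl]
  intro l hl l' hl' heq
  rcases le_total (l u) (l' u) with hle | hle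
  · exact eq_of_apply_le l' hl' l hl heq.symm hle
  · exact (eq_of_apply_le l hl l' hl' heq hle).symm

theorem ncard_isDualVertex_le_of_card_filter_pos_le [Fintype ι] {A : Set (Module.Dual 𝕜 W)}
    {u : W} {m : ℕ} {c : Module.Dual 𝕜 W → ι →₀ 𝕜} (hA : ∀ l ∈ A, IsDualVertex f ω l)
    (hc : ∀ l ∈ A, ((c l).support : Set ι) = tightSet f ω l)
    (hu : ∀ l ∈ A, Finsupp.linearCombination 𝕜 f (c l) = u)
    (hm : ∀ l ∈ A, {i ∈ (c l).support | 0 < c l i}.card ≤ m) :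
    A.ncard ≤ (Fintype.card ι + 1) ^ m :=
  (Set.ncard_le_ncard_of_injOn _ hm (injOn_filter_pos_of_isDualVertex hA hc hu)).trans
    (ncard_setOf_card_le ι m)

theorem ncard_setOf_isDualVertex_le [Fintype ι] (hω : IsGenericHeight f ω) :
    {l | IsDualVertex f ω l}.ncard ≤
      2 * (Fintype.card ι + 1) ^ (Module.finrank 𝕜 W / 2) := by
  obtain ⟨u, hu⟩ := exists_isGenericVector (𝕜 := 𝕜) f
  choose! c hc hcu using
    fun l (hl : IsDualVertex f ω l) ↦ hl.exists_support_eq_tightSet hω hu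
  let A := {l | IsDualVertex f ω l ∧
    {i ∈ (c l).support | 0 < c l i}.card ≤ Module.finrank 𝕜 W / 2}
  let B := {l | IsDualVertex f ω l ∧
    {i ∈ (-c l).support | 0 < (-c l) i}.card ≤ Module.finrank 𝕜 W / 2}
  have hcover : {l | IsDualVertex f ω l} ⊆ A ∪ B := by
    intro l hl
    have hcard : (c l).support.card = Module.finrank 𝕜 W := by
      rw [← hl.ncard_tightSet hω, ← hc l hl, Set.ncard_coe_finset]
    have hsplit := Finset.card_filter_add_card_filter_not (s := (c l).support) (0 < c l ·)
    have hneg : {i ∈ (-c l).support | 0 < (-c l) i}.card ≤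
        {i ∈ (c l).support | ¬ 0 < c l i}.card :=
      Finset.card_le_card fun i ↦ by simpa using fun h h' ↦ ⟨h, h'.le⟩
    by_cases hl' : {i ∈ (c l).support | 0 < c l i}.card ≤ Module.finrank 𝕜 W / 2
    · exact .inl ⟨hl, hl'⟩
    · exact .inr ⟨hl, by omega⟩
  have hAcard : A.ncard ≤ _ := ncard_isDualVertex_le_of_card_filter_pos_le (c := c)
    (fun l hl ↦ hl.1) (fun l hl ↦ hc l hl.1) (fun l hl ↦ hcu l hl.1) fun l hl ↦ hl.2
  have hBcard : B.ncard ≤ _ := ncard_isDualVertex_le_of_card_filter_pos_le (c := -c) (u := -u)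
    (fun l hl ↦ hl.1) (fun l hl ↦ by simpa using hc l hl.1)
    (fun l hl ↦ by simpa using hcu l hl.1) fun l hl ↦ hl.2
  calc {l | IsDualVertex f ω l}.ncard
    _ ≤ (A ∪ B).ncard := Set.ncard_le_ncard hcover <|
        finite_setOf_isDualVertex.subset (Set.union_subset (fun l hl ↦ hl.1) fun l hl ↦ hl.1)
    _ ≤ A.ncard + B.ncard := Set.ncard_union_le A B
    _ ≤ 2 * (Fintype.card ι + 1) ^ (Module.finrank 𝕜 W / 2) := by omega

/-! ### Moving to a dual vertex inside a face -/

theorem exists_dual_pos_of_notMem {p : Submodule 𝕜 W} {x : W} (hx : x ∉ p) :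
    ∃ μ : Module.Dual 𝕜 W, 0 < μ x ∧ ∀ y ∈ p, μ y = 0 := by
  obtain ⟨μ, hμx, hμp⟩ := Submodule.exists_le_ker_of_notMem hx
  rcases lt_or_gt_of_ne hμx with hneg | hpos
  · exact ⟨-μ, by simpa using hneg, fun y hy ↦ by simpa using hμp hy⟩
  · exact ⟨μ, hpos, fun y hy ↦ hμp hy⟩

-- Move along a ray on which the tight constraints stay tight until a new one becomes tight.
theorem exists_inter_tightSet_ssubset [Finite ι] {F : Set ι} {l : Module.Dual 𝕜 W}
    (hl : ∀ i ∈ F, l (f i) ≤ ω i) {i₀ : ι} (hi₀ : i₀ ∈ F)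
    (hspan : f i₀ ∉ Submodule.span 𝕜 (f '' (F ∩ tightSet f ω l))) :
    ∃ l' : Module.Dual 𝕜 W, (∀ i ∈ F, l' (f i) ≤ ω i) ∧
      F ∩ tightSet f ω l ⊂ F ∩ tightSet f ω l' := by
  obtain ⟨μ, hμ₀, hμ⟩ := exists_dual_pos_of_notMem hspan
  have hμtight (i) (hi : i ∈ F ∩ tightSet f ω l) : μ (f i) = 0 :=
    hμ _ (Submodule.subset_span ⟨i, hi, rfl⟩)
  obtain ⟨i₁, ⟨hi₁, hμ₁⟩, hmin⟩ := Set.exists_min_image {i ∈ F | 0 < μ (f i)}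
    (fun i ↦ (ω i - l (f i)) / μ (f i)) (Set.toFinite _) ⟨i₀, hi₀, hμ₀⟩
  set t := (ω i₁ - l (f i₁)) / μ (f i₁) with ht
  have ht₀ : 0 ≤ t := div_nonneg (sub_nonneg.2 (hl i₁ hi₁)) hμ₁.le
  have htight₁ : i₁ ∈ F ∩ tightSet f ω (l + t • μ) :=
    ⟨hi₁, by simp [tightSet, ht, div_mul_cancel₀ _ hμ₁.ne']⟩
  refine ⟨l + t • μ, fun i hi ↦ ?_, Set.ssubset_iff_exists.2
    ⟨fun i hi ↦ ⟨hi.1, ?_⟩, i₁, htight₁, fun h ↦ hμ₁.ne' (hμtight i₁ h)⟩⟩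
  · change l (f i) + t * μ (f i) ≤ ω i
    rcases le_or_gt (μ (f i)) 0 with hi' | hi'
    · linarith [hl i hi, mul_nonpos_of_nonneg_of_nonpos ht₀ hi']
    · linarith [(le_div_iff₀ hi').1 (hmin i ⟨hi, hi'⟩)]
  · change l (f i) + t * μ (f i) = ω i
    rw [hμtight i hi, mul_zero, add_zero, hi.2]

theorem exists_span_inter_tightSet_eq [Finite ι] {F : Set ι} {l : Module.Dual 𝕜 W}
    (hl : ∀ i ∈ F, l (f i) ≤ ω i) :
    ∃ l' : Module.Dual 𝕜 W, (∀ i ∈ F, l' (f i) ≤ ω i) ∧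
      F ∩ tightSet f ω l ⊆ F ∩ tightSet f ω l' ∧
      Submodule.span 𝕜 (f '' (F ∩ tightSet f ω l')) = Submodule.span 𝕜 (f '' F) := by
  obtain ⟨_, hle, ⟨l', hl', rfl⟩, hmax⟩ := Set.Finite.exists_le_maximal
    (s := (fun l' ↦ F ∩ tightSet f ω l') '' {l' | ∀ i ∈ F, l' (f i) ≤ ω i})
    (Set.toFinite _) ⟨l, hl, rfl⟩
  refine ⟨l', hl', hle, (Submodule.span_mono (Set.image_mono Set.inter_subset_left)).antisymm
    (Submodule.span_le.2 ?_)⟩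
  rintro _ ⟨i, hi, rfl⟩
  by_contra hspan
  obtain ⟨l'', hl'', hlt⟩ := exists_inter_tightSet_ssubset hl' hi hspan
  exact hlt.2 (hmax ⟨l'', hl'', rfl⟩ hlt.1)

theorem exists_isDualVertex_span_inter_tightSet_eq [Finite ι] {l₀ lam : Module.Dual 𝕜 W}
    (hf : Submodule.span 𝕜 (Set.range f) = ⊤) (hl₀ : ∀ i, l₀ (f i) ≤ ω i)
    (hlam : ∀ i, lam (f i) ≤ 0) :
    ∃ l, IsDualVertex f ω l ∧
      Submodule.span 𝕜 (f '' ({i | lam (f i) = 0} ∩ tightSet f ω l)) =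
        Submodule.span 𝕜 (f '' {i | lam (f i) = 0}) := by
  obtain ⟨l₁, hl₁, -, hspan₁⟩ :=
    exists_span_inter_tightSet_eq (F := {i | lam (f i) = 0}) fun i _ ↦ hl₀ i
  -- Adding a large multiple of `lam` makes `l₁` feasible off the face without changing it there.
  obtain ⟨M, hM⟩ := (Set.finite_range fun i ↦ (ω i - l₁ (f i)) / lam (f i)).bddAbove
  have hfeasible (i) : (l₁ + M • lam) (f i) ≤ ω i := by
    rcases (hlam i).eq_or_lt with hi | hi
    · simpa [hi] using hl₁ i hi
    · have := (div_le_iff_of_neg hi).1 (hM ⟨i, rfl⟩)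
      simpa using by linarith
  obtain ⟨l, hl, hsub, hspan⟩ :=
    exists_span_inter_tightSet_eq (F := Set.univ) fun i _ ↦ hfeasible i
  simp only [Set.univ_inter, Set.image_univ, hf] at hsub hspan
  refine ⟨l, ⟨fun i ↦ hl i trivial, hspan⟩, (Submodule.span_mono
    (Set.image_mono Set.inter_subset_left)).antisymm ?_⟩
  rw [← hspan₁]
  refine Submodule.span_mono (Set.image_mono fun i hi ↦ ⟨hi.1, hsub ?_⟩)
  have hlam₀ : lam (f i) = 0 := hi.1
  have hl₁i : l₁ (f i) = ω i := hi.2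
  simp [tightSet, hlam₀, hl₁i]

end DualPolyhedron

/-! ### Faces of polytopes -/

section Faces

variable {E ι : Type*} [AddCommGroup E] [Module ℝ E]

theorem convexHull_inter_setOf_eq {V : Set E} {g : E →ₗ[ℝ] ℝ} {m : ℝ} (hg : ∀ v ∈ V, g v ≤ m) :
    convexHull ℝ V ∩ {x | g x = m} = convexHull ℝ {v ∈ V | g v = m} := by
  set F := convexHull ℝ {v ∈ V | g v = m}
  have hF : ∀ x ∈ F, g x = m :=
    convexHull_min (fun v hv ↦ hv.2) (convex_hyperplane g.isLinear m)
  have hconvex : Convex ℝ ({x | g x < m} ∪ F) := by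
    have hle {z} (hz : z ∈ {x | g x < m} ∪ F) : g z ≤ m :=
      hz.elim (fun h ↦ h.le) fun h ↦ (hF z h).le
    refine convex_iff_forall_pos.2 fun x hx y hy a b ha hb hab ↦ ?_
    by_cases hxy : x ∈ F ∧ y ∈ F
    · exact .inr (convex_convexHull ℝ _ hxy.1 hxy.2 ha.le hb.le hab)
    have hlt : g x < m ∨ g y < m := by
      by_contra! h
      exact hxy ⟨hx.resolve_left h.1.not_gt, hy.resolve_left h.2.not_gt⟩
    refine .inl (?_ : g (a • x + b • y) < m)
    rw [map_add, map_smul, map_smul, smul_eq_mul, smul_eq_mul]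
    have hm : a * m + b * m = m := by rw [← add_mul, hab, one_mul]
    rcases hlt with h | h
    · linarith [mul_lt_mul_of_pos_left h ha, mul_le_mul_of_nonneg_left (hle hy) hb.le]
    · linarith [mul_le_mul_of_nonneg_left (hle hx) ha.le, mul_lt_mul_of_pos_left h hb]
  have hsub : convexHull ℝ V ⊆ {x | g x < m} ∪ F := convexHull_min (fun v hv ↦
    (hg v hv).lt_or_eq.imp id fun h ↦ subset_convexHull ℝ _ ⟨hv, h⟩) hconvex
  exact Set.Subset.antisymm (fun x hx ↦ (hsub hx.1).resolve_left hx.2.not_lt)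
    fun x hx ↦ ⟨convexHull_mono (Set.sep_subset V _) hx, hF x hx⟩

/-- The family `v` lifted to height `1` in `E × ℝ`, so that linear spans of lifted points are the
cones over affine spans. -/
def liftOne (v : ι → E) (i : ι) : E × ℝ := (v i, 1)

theorem mk_one_mem_span_liftOne {v : ι → E} {S : Set ι} {x : E}
    (hx : x ∈ affineSpan ℝ (v '' S)) : (x, (1 : ℝ)) ∈ Submodule.span ℝ (liftOne v '' S) := by
  let lift : E →ᵃ[ℝ] E × ℝ := (AffineMap.id ℝ E).prod (AffineMap.const ℝ E 1)
  have hle : affineSpan ℝ (v '' S) ≤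
      (Submodule.span ℝ (liftOne v '' S)).toAffineSubspace.comap lift := by
    refine affineSpan_le.2 ?_
    rintro _ ⟨i, hi, rfl⟩
    exact Submodule.subset_span ⟨i, hi, rfl⟩
  exact hle hx

theorem span_range_liftOne {v : ι → E} (hv : affineSpan ℝ (Set.range v) = ⊤) :
    Submodule.span ℝ (Set.range (liftOne v)) = ⊤ := by
  have hmem (x : E) : (x, (1 : ℝ)) ∈ Submodule.span ℝ (Set.range (liftOne v)) := by
    rw [← Set.image_univ]
    exact mk_one_mem_span_liftOne (by rw [Set.image_univ, hv]; exact AffineSubspace.mem_top ℝ E x)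
  refine Submodule.eq_top_iff'.2 fun ⟨x, t⟩ ↦ ?_
  simpa using add_mem (sub_mem (hmem x) (hmem 0)) (Submodule.smul_mem _ t (hmem 0))

theorem convexHull_range_inter_setOf_eq_setOf_mem_span {v : ι → E} {g : E →ₗ[ℝ] ℝ} {m : ℝ}
    (hg : ∀ i, g (v i) ≤ m) :
    convexHull ℝ (Set.range v) ∩ {x | g x = m} = {x ∈ convexHull ℝ (Set.range v) |
      (x, 1) ∈ Submodule.span ℝ (liftOne v '' {i | g (v i) = m})} := by
  have hface := convexHull_inter_setOf_eq (Set.forall_mem_range.2 hg)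
  refine Set.ext fun x ↦ and_congr_right fun hx ↦ ⟨fun hxm ↦ ?_, fun hspan ↦ ?_⟩
  · have himage : {y ∈ Set.range v | g y = m} = v '' {i | g (v i) = m} := by
      ext; constructor <;> aesop
    have hx' := hface.subset ⟨hx, hxm⟩
    rw [himage] at hx'
    exact mk_one_mem_span_liftOne (convexHull_subset_affineSpan _ hx')
  · have hle : Submodule.span ℝ (liftOne v '' {i | g (v i) = m}) ≤
        LinearMap.ker (g.coprod (-m • LinearMap.id)) := by
      refine Submodule.span_le.2 ?_
      rintro _ ⟨i, hi, rfl⟩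
      simpa [liftOne, ← sub_eq_add_neg, sub_eq_zero] using hi
    simpa [← sub_eq_add_neg, sub_eq_zero] using hle hspan

variable [TopologicalSpace E]

theorem exists_eq_setOf_of_isExposed {P F : Set E} (hF : IsExposed ℝ P F) (hne : F.Nonempty) :
    ∃ (g : E →L[ℝ] ℝ) (m : ℝ), (∀ x ∈ P, g x ≤ m) ∧ F = P ∩ {x | g x = m} := by
  obtain ⟨g, rfl⟩ := hF hne
  obtain ⟨x₀, hx₀, hmax⟩ := hne
  refine ⟨g, g x₀, hmax, Set.ext fun x ↦ and_congr_right fun hx ↦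
    ⟨fun h ↦ (hmax x hx).antisymm (h x₀ hx₀), fun h y hy ↦ (hmax y hy).trans_eq h.symm⟩⟩

theorem isExposed_inter_setOf_eq {P : Set E} {g : E →L[ℝ] ℝ} {m : ℝ} (hg : ∀ x ∈ P, g x ≤ m) :
    IsExposed ℝ P (P ∩ {x | g x = m}) := by
  rintro ⟨x₀, hx₀, rfl⟩
  exact ⟨g, Set.ext fun x ↦ and_congr_right fun hx ↦
    ⟨fun h y hy ↦ (hg y hy).trans_eq h.symm, fun h ↦ (hg x hx).antisymm (h x₀ hx₀)⟩⟩

theorem exists_isDualVertex_eq_setOf_mem_span [Finite ι] {v : ι → E} {F : Set E}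
    (hv : affineSpan ℝ (Set.range v) = ⊤) (ω : ι → ℝ)
    (hF : IsExposed ℝ (convexHull ℝ (Set.range v)) F) (hne : F.Nonempty) :
    ∃ l, IsDualVertex (liftOne v) ω l ∧ ∃ S ⊆ tightSet (liftOne v) ω l,
      F = {x ∈ convexHull ℝ (Set.range v) | (x, 1) ∈ Submodule.span ℝ (liftOne v '' S)} := by
  obtain ⟨g, m, hg, rfl⟩ := exists_eq_setOf_of_isExposed hF hne
  let lam : Module.Dual ℝ (E × ℝ) := (g : E →ₗ[ℝ] ℝ).coprod (-m • LinearMap.id)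
  have hlam (i) : lam (liftOne v i) = g (v i) - m := by simp [lam, liftOne, sub_eq_add_neg]
  have hg' (i) : g (v i) ≤ m := hg _ (subset_convexHull ℝ _ ⟨i, rfl⟩)
  obtain ⟨M, hM⟩ := (Set.finite_range ω).bddBelow
  obtain ⟨l, hl, hspan⟩ := exists_isDualVertex_span_inter_tightSet_eq (f := liftOne v) (ω := ω)
    (l₀ := M • LinearMap.snd ℝ E ℝ) (lam := lam) (span_range_liftOne hv)
    (fun i ↦ by simpa [liftOne] using hM ⟨i, rfl⟩)
    (fun i ↦ (hlam i).trans_le (sub_nonpos.2 (hg' i)))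
  refine ⟨l, hl, {i | lam (liftOne v i) = 0} ∩ tightSet (liftOne v) ω l,
    Set.inter_subset_right, ?_⟩
  rw [hspan]
  simp only [hlam, sub_eq_zero]
  exact convexHull_range_inter_setOf_eq_setOf_mem_span (g := (g : E →ₗ[ℝ] ℝ)) hg'

theorem finite_and_ncard_setOf_isExposed_le [FiniteDimensional ℝ E] [Fintype ι] {v : ι → E}
    (hv : affineSpan ℝ (Set.range v) = ⊤) :
    {F | IsExposed ℝ (convexHull ℝ (Set.range v)) F ∧ F.Nonempty}.Finite ∧
    {F | IsExposed ℝ (convexHull ℝ (Set.range v)) F ∧ F.Nonempty}.ncard ≤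
      2 * (Fintype.card ι + 1) ^ ((Module.finrank ℝ E + 1) / 2) *
        2 ^ (Module.finrank ℝ E + 1) := by
  obtain ⟨ω, hω⟩ := exists_isGenericHeight (𝕜 := ℝ) (liftOne v)
  have hfinrank : Module.finrank ℝ (E × ℝ) = Module.finrank ℝ E + 1 := by simp
  let facesAt (l : Module.Dual ℝ (E × ℝ)) : Set (Set E) :=
    (fun S ↦ {x ∈ convexHull ℝ (Set.range v) | (x, 1) ∈ Submodule.span ℝ (liftOne v '' S)}) ''
      𝒫 tightSet (liftOne v) ω l
  have hvertices := finite_setOf_isDualVertex (f := liftOne v) (ω := ω)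
  have hcover : {F | IsExposed ℝ (convexHull ℝ (Set.range v)) F ∧ F.Nonempty} ⊆
      ⋃ l ∈ hvertices.toFinset, facesAt l := by
    rintro F ⟨hF, hne⟩
    obtain ⟨l, hl, S, hS, rfl⟩ := exists_isDualVertex_eq_setOf_mem_span hv ω hF hne
    exact Set.mem_biUnion (hvertices.mem_toFinset.2 hl) ⟨S, hS, rfl⟩
  have hfacesAt (l) (hl : l ∈ hvertices.toFinset) :
      (facesAt l).ncard ≤ 2 ^ (Module.finrank ℝ E + 1) := by
    rw [← hfinrank, ← ((hvertices.mem_toFinset.1 hl).ncard_tightSet hω), ← Set.ncard_powerset]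
    exact Set.ncard_image_le
  have hfinite : (⋃ l ∈ hvertices.toFinset, facesAt l).Finite :=
    hvertices.toFinset.finite_toSet.biUnion fun l _ ↦ Set.toFinite _
  refine ⟨hfinite.subset hcover, (Set.ncard_le_ncard hcover hfinite).trans ?_⟩
  calc (⋃ l ∈ hvertices.toFinset, facesAt l).ncard
    _ ≤ ∑ l ∈ hvertices.toFinset, (facesAt l).ncard := Finset.set_ncard_biUnion_le _ _
    _ ≤ hvertices.toFinset.card * 2 ^ (Module.finrank ℝ E + 1) :=
        Finset.sum_le_card_nsmul _ _ _ hfacesAt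
    _ ≤ _ := by
        gcongr
        rw [← Set.ncard_eq_toFinset_card _ hvertices, ← hfinrank]
        exact ncard_setOf_isDualVertex_le hω

variable [T2Space E] [IsTopologicalAddGroup E] [ContinuousSMul ℝ E] [LocallyConvexSpace ℝ E]

theorem convexHull_extremePoints_convexHull {V : Set E} (hV : V.Finite) :
    convexHull ℝ (Set.extremePoints ℝ (convexHull ℝ V)) = convexHull ℝ V := by
  have hfinite : (Set.extremePoints ℝ (convexHull ℝ V)).Finite :=
    hV.subset extremePoints_convexHull_subset
  rw [← (hfinite.isClosed_convexHull ℝ).closure_eq,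
    closure_convexHull_extremePoints (hV.isCompact_convexHull ℝ) (convex_convexHull ℝ V)]

end Faces

theorem IsCSPolytope.finite_and_ncard_faces_le {d : ℕ} {P : Set (EuclideanSpace ℝ (Fin d))}
    (hP : IsCSPolytope P) (hspan : affineSpan ℝ P = ⊤) :
    {F | IsExposed ℝ P F ∧ F.Nonempty}.Finite ∧ {F | IsExposed ℝ P F ∧ F.Nonempty}.ncard ≤
      2 * ((Set.extremePoints ℝ P).ncard + 1) ^ ((d + 1) / 2) * 2 ^ (d + 1) := by
  obtain ⟨⟨V, rfl⟩, -⟩ := hP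
  set X := Set.extremePoints ℝ (convexHull ℝ (V : Set (EuclideanSpace ℝ (Fin d))))
  have hX : X.Finite := V.finite_toSet.subset extremePoints_convexHull_subset
  have hhull : convexHull ℝ (Set.range ((↑) : X → EuclideanSpace ℝ (Fin d))) = convexHull ℝ V := by
    rw [Subtype.range_coe, convexHull_extremePoints_convexHull V.finite_toSet]
  have := hX.fintype
  rw [← hhull, affineSpan_convexHull] at hspan
  have hfaces := finite_and_ncard_setOf_isExposed_le hspan
  rwa [hhull, ← Nat.card_eq_fintype_card, Nat.card_coe_set_eq, finrank_euclideanSpace_fin] at hfaces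

theorem IsCSPolytope.finite_faces {d : ℕ} {P : Set (EuclideanSpace ℝ (Fin d))}
    (hP : IsCSPolytope P) (hspan : affineSpan ℝ P = ⊤) (j : ℕ) :
    {F | IsExposed ℝ P F ∧ F.Nonempty ∧ Module.finrank ℝ (vectorSpan ℝ F) = j}.Finite :=
  (hP.finite_and_ncard_faces_le hspan).1.subset fun _ hF ↦ ⟨hF.1, hF.2.1⟩

theorem IsCSPolytope.faceCount_le {d : ℕ} {P : Set (EuclideanSpace ℝ (Fin d))}
    (hP : IsCSPolytope P) (hspan : affineSpan ℝ P = ⊤) (j : ℕ) :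
    faceCount P j ≤
      2 * ((Set.extremePoints ℝ P).ncard + 1) ^ ((d + 1) / 2) * 2 ^ (d + 1) := by
  obtain ⟨hfinite, hcard⟩ := hP.finite_and_ncard_faces_le hspan
  refine (Set.ncard_le_ncard ?_ hfinite).trans hcard
  exact fun F hF ↦ ⟨hF.1, hF.2.1⟩

theorem fmax_le (d n j : ℕ) : fmax d n j ≤ 2 * (n + 1) ^ ((d + 1) / 2) * 2 ^ (d + 1) := by
  refine csSup_le' ?_
  rintro _ ⟨P, hP, hspan, rfl, rfl⟩
  exact hP.faceCount_le hspan j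

theorem IsCSPolytope.faceCount_le_fmax {d : ℕ} {P : Set (EuclideanSpace ℝ (Fin d))}
    (hP : IsCSPolytope P) (hspan : affineSpan ℝ P = ⊤) (j : ℕ) :
    faceCount P j ≤ fmax d (Set.extremePoints ℝ P).ncard j := by
  refine le_csSup ⟨2 * ((Set.extremePoints ℝ P).ncard + 1) ^ ((d + 1) / 2) * 2 ^ (d + 1), ?_⟩
    ⟨P, hP, hspan, rfl, rfl⟩
  rintro _ ⟨Q, hQ, hQspan, hQcard, rfl⟩
  exact hQcard ▸ hQ.faceCount_le hQspan j

/-! ### Symmetric convex hulls -/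

section SymmetricHull

variable {E : Type*} [AddCommGroup E] [Module ℝ E] {X : Set E}

/-- The convex hull of the points `± x` with `x ∈ X`. -/
def symmHull (X : Set E) : Set E := convexHull ℝ (X ∪ -X)

theorem neg_symmHull (X : Set E) : -symmHull X = symmHull X := by
  rw [symmHull, ← convexHull_neg, Set.union_neg, neg_neg, Set.union_comm]

theorem affineSpan_symmHull_eq_top (hX : X.Nonempty) (hspan : Submodule.span ℝ X = ⊤) :
    affineSpan ℝ (symmHull X) = ⊤ := by
  obtain ⟨x, hx⟩ := hX
  have hzero : (0 : E) ∈ affineSpan ℝ (X ∪ -X) := by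
    rw [← midpoint_self_neg ℝ x]
    exact AffineMap.lineMap_mem _ (mem_affineSpan ℝ (.inl hx))
      (mem_affineSpan ℝ (.inr (by simpa using hx)))
  rw [symmHull, affineSpan_convexHull, ← affineSpan_insert_eq_affineSpan ℝ hzero,
    ← SetLike.coe_set_eq, affineSpan_insert_zero, Submodule.span_union, hspan, top_sup_eq]
  rfl

theorem apply_nonpos_of_mem_neg {g : E →ₗ[ℝ] ℝ} (hg : ∀ x ∈ X, 0 ≤ g x) {x : E} (hx : x ∈ -X) :
    g x ≤ 0 := by
  simpa using hg (-x) hx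

theorem apply_le_one_of_mem_union_neg {g : E →ₗ[ℝ] ℝ} (hg : ∀ x ∈ X, g x ∈ Set.Icc 0 1) {x : E}
    (hx : x ∈ X ∪ -X) : g x ≤ 1 :=
  hx.elim (fun h ↦ (hg x h).2)
    fun h ↦ (apply_nonpos_of_mem_neg (fun y hy ↦ (hg y hy).1) h).trans zero_le_one

theorem symmHull_inter_setOf_eq_one {g : E →ₗ[ℝ] ℝ} (hg : ∀ x ∈ X, g x ∈ Set.Icc 0 1) :
    symmHull X ∩ {x | g x = 1} = convexHull ℝ {x ∈ X | g x = 1} := by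
  rw [symmHull, convexHull_inter_setOf_eq fun x ↦ apply_le_one_of_mem_union_neg hg]
  refine congrArg _ (Set.ext fun x ↦ and_congr_left fun hx₁ ↦ or_iff_left fun hx ↦ ?_)
  linarith [apply_nonpos_of_mem_neg (fun y hy ↦ (hg y hy).1) hx]

variable [TopologicalSpace E]

theorem isExposed_symmHull {g : E →L[ℝ] ℝ} (hg : ∀ x ∈ X, g x ∈ Set.Icc 0 1) :
    IsExposed ℝ (symmHull X) (convexHull ℝ {x ∈ X | g x = 1}) := by
  have hle : symmHull X ⊆ {x | g x ≤ 1} :=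
    convexHull_min (fun x ↦ apply_le_one_of_mem_union_neg (g := (g : E →ₗ[ℝ] ℝ)) hg)
      (convex_halfSpace_le (g : E →ₗ[ℝ] ℝ).isLinear 1)
  have hface := isExposed_inter_setOf_eq hle
  rwa [show {x | g x = 1} = {x | (g : E →ₗ[ℝ] ℝ) x = 1} from rfl,
    symmHull_inter_setOf_eq_one (g := (g : E →ₗ[ℝ] ℝ)) hg] at hface

theorem extremePoints_symmHull
    (hX : ∀ x ∈ X, ∃ g : E →L[ℝ] ℝ, ∀ y ∈ X, g y ∈ Set.Icc 0 1 ∧ (g y = 1 ↔ y = x)) :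
    Set.extremePoints ℝ (symmHull X) = X ∪ -X := by
  have hsub : X ⊆ Set.extremePoints ℝ (symmHull X) := by
    intro x hx
    obtain ⟨g, hg⟩ := hX x hx
    have hface : {y ∈ X | g y = 1} = {x} := by
      ext y; exact ⟨fun hy ↦ (hg y hy.1).2.1 hy.2, fun hy ↦ hy ▸ ⟨hx, (hg x hx).2.2 rfl⟩⟩
    have hexposed := isExposed_symmHull fun y hy ↦ (hg y hy).1
    rw [hface, convexHull_singleton] at hexposed
    exact exposedPoints_subset_extremePoints (mem_exposedPoints_iff_exposed_singleton.2 hexposed)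
  have hneg : -Set.extremePoints ℝ (symmHull X) = Set.extremePoints ℝ (symmHull X) := by
    simpa [Set.image_neg_eq_neg, neg_symmHull] using
      image_extremePoints (LinearEquiv.neg ℝ) (symmHull X)
  refine extremePoints_convexHull_subset.antisymm (Set.union_subset hsub ?_)
  exact (Set.neg_subset_neg.2 hsub).trans hneg.subset

theorem ncard_extremePoints_symmHull (hfinite : X.Finite)
    (hX : ∀ x ∈ X, ∃ g : E →L[ℝ] ℝ, ∀ y ∈ X, g y ∈ Set.Icc 0 1 ∧ (g y = 1 ↔ y = x)) :
    (Set.extremePoints ℝ (symmHull X)).ncard = 2 * X.ncard := by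
  have hdisjoint : Disjoint X (-X) := by
    refine Set.disjoint_left.2 fun x hx hx' ↦ ?_
    obtain ⟨g, hg⟩ := hX x hx
    have h1 : g x = 1 := (hg x hx).2.2 rfl
    have h2 := (hg (-x) hx').1.1
    rw [map_neg] at h2
    linarith
  rw [extremePoints_symmHull hX, Set.ncard_union_eq hdisjoint hfinite hfinite.neg, Set.ncard_neg,
    two_mul]

end SymmetricHull

theorem isCSPolytope_symmHull {d : ℕ} {X : Set (EuclideanSpace ℝ (Fin d))} (hX : X.Finite) :
    IsCSPolytope (symmHull X) :=
  ⟨⟨(hX.union hX.neg).toFinset, by rw [Set.Finite.coe_toFinset, symmHull]⟩, (neg_symmHull X).symm⟩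

/-! ### Free sums of polygons inscribed in parabolas -/

section Parabola

variable {ι E : Type*} [AddCommGroup E] [Module ℝ E] {b : Module.Basis (ι ⊕ ι) ℝ E} {M : ℝ}

/-- The point with parameter `t` on a parabola with apex height `M` in the `i`-th of the
complementary planes spanned by the basis vectors `inl i` and `inr i`. -/
noncomputable def parabolaPoint (b : Module.Basis (ι ⊕ ι) ℝ E) (M : ℝ) (i : ι) (t : ℝ) : E :=
  t • b (.inl i) + (M - t ^ 2) • b (.inr i)

/-- The functional on the `i`-th plane whose level line `1` is the chord of the parabola joining
the parameters `s` and `t`, or the tangent if `s = t`. -/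
noncomputable def chordFunctional (b : Module.Basis (ι ⊕ ι) ℝ E) (M : ℝ) (i : ι) (s t : ℝ) :
    E →ₗ[ℝ] ℝ :=
  (M + s * t)⁻¹ • (b.coord (.inr i) + (s + t) • b.coord (.inl i))

theorem coord_inl_parabolaPoint [DecidableEq ι] (i i' : ι) (t : ℝ) :
    b.coord (.inl i) (parabolaPoint b M i' t) = if i' = i then t else 0 := by
  simp [parabolaPoint, Finsupp.single_apply]

theorem coord_inr_parabolaPoint [DecidableEq ι] (i i' : ι) (t : ℝ) :
    b.coord (.inr i) (parabolaPoint b M i' t) = if i' = i then M - t ^ 2 else 0 := by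
  split_ifs with h <;> simp [parabolaPoint, h]

theorem chordFunctional_parabolaPoint_of_ne {i i' : ι} (h : i' ≠ i) (s t r : ℝ) :
    chordFunctional b M i s t (parabolaPoint b M i' r) = 0 := by
  classical
  simp [chordFunctional, coord_inl_parabolaPoint, coord_inr_parabolaPoint, h,
    -Module.Basis.coord_apply]

theorem chordFunctional_parabolaPoint_self {s t : ℝ} (hM : M + s * t ≠ 0) (i : ι) (r : ℝ) :
    chordFunctional b M i s t (parabolaPoint b M i r) = 1 - (r - s) * (r - t) / (M + s * t) := by
  classical
  have happly : chordFunctional b M i s t (parabolaPoint b M i r) =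
      (M + s * t)⁻¹ * (M - r ^ 2 + (s + t) * r) := by
    simp [chordFunctional, coord_inl_parabolaPoint, coord_inr_parabolaPoint, mul_add,
      -Module.Basis.coord_apply]
  rw [happly]
  field_simp
  ring

theorem linearIndependent_parabolaPoint [Finite ι] {s t : ι → ℝ} (hst : ∀ i, s i ≠ t i)
    (hM : ∀ i, M + s i * t i ≠ 0) :
    LinearIndependent ℝ (Sum.elim (fun i ↦ parabolaPoint b M i (s i))
      (fun i ↦ parabolaPoint b M i (t i))) := by
  classical
  cases nonempty_fintype ι
  refine Fintype.linearIndependent_iff.2 fun c hc ↦ ?_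
  rw [Fintype.sum_sum_type] at hc
  have hinl (i : ι) : c (.inl i) * s i + c (.inr i) * t i = 0 := by
    simpa [coord_inl_parabolaPoint, -Module.Basis.coord_apply] using
      congrArg (b.coord (.inl i)) hc
  have hinr (i : ι) : c (.inl i) * (M - s i ^ 2) + c (.inr i) * (M - t i ^ 2) = 0 := by
    simpa [coord_inr_parabolaPoint, -Module.Basis.coord_apply] using
      congrArg (b.coord (.inr i)) hc
  have hdet (i : ι) : (s i - t i) * (M + s i * t i) ≠ 0 :=
    mul_ne_zero (sub_ne_zero.2 (hst i)) (hM i)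
  rintro (i | i)
  · refine (mul_eq_zero.1 ?_).resolve_right (hdet i)
    linear_combination (M - t i ^ 2) * hinl i - t i * hinr i
  · refine (mul_eq_zero.1 ?_).resolve_right (hdet i)
    linear_combination s i * hinr i - (M - s i ^ 2) * hinl i

theorem sum_chordFunctional_parabolaPoint [Fintype ι] {s t : ι → ℝ} {i : ι}
    (hM : M + s i * t i ≠ 0) (r : ℝ) :
    (∑ i', chordFunctional b M i' (s i') (t i')) (parabolaPoint b M i r) =
      1 - (r - s i) * (r - t i) / (M + s i * t i) := by
  rw [LinearMap.sum_apply, Fintype.sum_eq_single i fun i' hi' ↦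
    chordFunctional_parabolaPoint_of_ne hi'.symm _ _ _, chordFunctional_parabolaPoint_self hM]

theorem sub_mul_sub_nonneg_of_le_add_one {a c r : ℤ} (hac : a ≤ c) (hca : c ≤ a + 1) :
    0 ≤ (r - a) * (r - c) := by
  rcases le_or_gt r a with hra | har
  · exact mul_nonneg_of_nonpos_of_nonpos (by lia) (by lia)
  · exact mul_nonneg (by lia) (by lia)

theorem one_sub_mul_div_mem_Icc {a c r : ℕ} (hM : 0 < M) (hac : a ≤ c) (hca : c ≤ a + 1)
    (hr : (r : ℝ) ^ 2 ≤ M) :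
    1 - ((r : ℝ) - a) * (r - c) / (M + a * c) ∈ Set.Icc (0 : ℝ) 1 := by
  have hpos : 0 < M + a * c := by positivity
  have hnonneg : 0 ≤ ((r : ℝ) - a) * (r - c) := by
    exact_mod_cast sub_mul_sub_nonneg_of_le_add_one (a := a) (c := c) (r := r)
      (by exact_mod_cast hac) (by exact_mod_cast hca)
  have hle : ((r : ℝ) - a) * (r - c) ≤ M + a * c := by
    have : (0 : ℝ) ≤ (a + c) * r := by positivity
    linarith
  exact ⟨sub_nonneg.2 ((div_le_one hpos).2 hle), sub_le_self _ (div_nonneg hnonneg hpos.le)⟩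

theorem one_sub_mul_div_eq_one_iff {a c r : ℕ} (hM : 0 < M) :
    1 - ((r : ℝ) - a) * (r - c) / (M + a * c) = 1 ↔ r = a ∨ r = c := by
  have hpos : M + a * c ≠ 0 := by positivity
  simp [hpos, sub_eq_zero]

theorem chordFunctional_parabolaPoint_eq_one_iff (hM : 0 < M) {i i' : ι} {t r : ℕ} :
    chordFunctional b M i t t (parabolaPoint b M i' r) = 1 ↔ i' = i ∧ r = t := by
  rcases eq_or_ne i' i with rfl | h
  · rw [chordFunctional_parabolaPoint_self (by positivity), one_sub_mul_div_eq_one_iff hM]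
    simp
  · simp [chordFunctional_parabolaPoint_of_ne h, h]

theorem injective_parabolaPoint (hM : 0 < M) :
    Function.Injective fun p : ι × ℕ ↦ parabolaPoint b M p.1 p.2 := by
  rintro ⟨i, t⟩ ⟨i', t'⟩ h
  have hself := (chordFunctional_parabolaPoint_eq_one_iff (b := b) hM).2 ⟨Eq.refl i, Eq.refl t⟩
  obtain ⟨rfl, rfl⟩ :=
    (chordFunctional_parabolaPoint_eq_one_iff hM).1 ((congrArg _ h).symm.trans hself)
  rfl

/-- The points with natural parameters on the parabolas, indexed by pairs of a plane and a
parameter. Their symmetric convex hull is a free sum of centrally symmetric polygons. -/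
def parabolaPoints (b : Module.Basis (ι ⊕ ι) ℝ E) (M : ℝ) (A : Finset (ι × ℕ)) : Set E :=
  (fun p : ι × ℕ ↦ parabolaPoint b M p.1 p.2) '' A

variable {A : Finset (ι × ℕ)}

theorem finite_parabolaPoints : (parabolaPoints b M A).Finite := A.finite_toSet.image _

theorem ncard_parabolaPoints (hM : 0 < M) : (parabolaPoints b M A).ncard = A.card := by
  rw [parabolaPoints, Set.ncard_image_of_injective _ (injective_parabolaPoint hM),
    Set.ncard_coe_finset]

theorem chordFunctional_mem_Icc (hM : 0 < M) (hA : ∀ p ∈ A, (p.2 : ℝ) ^ 2 ≤ M) (i : ι) (t : ℕ)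
    {x : E} (hx : x ∈ parabolaPoints b M A) : chordFunctional b M i t t x ∈ Set.Icc 0 1 := by
  obtain ⟨⟨i', r⟩, hp, rfl⟩ := hx
  rcases eq_or_ne i' i with rfl | h
  · rw [chordFunctional_parabolaPoint_self (by positivity)]
    exact one_sub_mul_div_mem_Icc hM le_rfl t.le_succ (hA _ hp)
  · simp [chordFunctional_parabolaPoint_of_ne h]

theorem sum_chordFunctional_mem_Icc [Fintype ι] (hM : 0 < M) (hA : ∀ p ∈ A, (p.2 : ℝ) ^ 2 ≤ M)
    {a c : ι → ℕ} (hac : ∀ i, a i ≤ c i) (hca : ∀ i, c i ≤ a i + 1) {x : E}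
    (hx : x ∈ parabolaPoints b M A) :
    (∑ i, chordFunctional b M i (a i) (c i)) x ∈ Set.Icc 0 1 := by
  obtain ⟨⟨i, r⟩, hp, rfl⟩ := hx
  rw [sum_chordFunctional_parabolaPoint (s := fun i ↦ a i) (t := fun i ↦ c i) (by positivity)]
  exact one_sub_mul_div_mem_Icc hM (hac i) (hca i) (hA _ hp)

theorem sum_chordFunctional_parabolaPoint_eq_one_iff [Fintype ι] (hM : 0 < M) {a c : ι → ℕ}
    {i : ι} {r : ℕ} :
    (∑ i', chordFunctional b M i' (a i') (c i')) (parabolaPoint b M i r) = 1 ↔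
      r = a i ∨ r = c i := by
  rw [sum_chordFunctional_parabolaPoint (s := fun i ↦ a i) (t := fun i ↦ c i) (by positivity),
    one_sub_mul_div_eq_one_iff hM]

/-- The join over all planes of the edges with parameters `a i` and `c i`; such an edge is a vertex
if `a i = c i`. -/
def joinFace (b : Module.Basis (ι ⊕ ι) ℝ E) (M : ℝ) (a c : ι → ℕ) : Set E :=
  convexHull ℝ (Set.range (fun i ↦ parabolaPoint b M i (a i)) ∪
    Set.range (fun i ↦ parabolaPoint b M i (c i)))

theorem sep_parabolaPoints_eq [Fintype ι] (hM : 0 < M) {a c : ι → ℕ} (ha : ∀ i, (i, a i) ∈ A)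
    (hc : ∀ i, (i, c i) ∈ A) :
    {x ∈ parabolaPoints b M A | (∑ i, chordFunctional b M i (a i) (c i)) x = 1} =
      Set.range (fun i ↦ parabolaPoint b M i (a i)) ∪
        Set.range (fun i ↦ parabolaPoint b M i (c i)) := by
  ext x
  constructor
  · rintro ⟨⟨⟨i, r⟩, -, rfl⟩, hx⟩
    obtain (rfl | rfl) : r = a i ∨ r = c i :=
      (sum_chordFunctional_parabolaPoint_eq_one_iff hM).1 hx
    · exact .inl ⟨i, rfl⟩
    · exact .inr ⟨i, rfl⟩
  · rintro (⟨i, rfl⟩ | ⟨i, rfl⟩)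
    · exact ⟨⟨_, ha i, rfl⟩, (sum_chordFunctional_parabolaPoint_eq_one_iff hM).2 (.inl rfl)⟩
    · exact ⟨⟨_, hc i, rfl⟩, (sum_chordFunctional_parabolaPoint_eq_one_iff hM).2 (.inr rfl)⟩

theorem parabolaPoint_mem_joinFace_iff [Finite ι] (hM : 0 < M) {a c : ι → ℕ} {i : ι} {r : ℕ} :
    parabolaPoint b M i r ∈ joinFace b M a c ↔ r = a i ∨ r = c i := by
  cases nonempty_fintype ι
  constructor
  · intro h
    have hle : joinFace b M a c ⊆ {x | (∑ i, chordFunctional b M i (a i) (c i)) x = 1} := by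
      refine convexHull_min ?_ (convex_hyperplane (LinearMap.isLinear _) 1)
      rintro _ (⟨i, rfl⟩ | ⟨i, rfl⟩)
      · exact (sum_chordFunctional_parabolaPoint_eq_one_iff hM).2 (.inl rfl)
      · exact (sum_chordFunctional_parabolaPoint_eq_one_iff hM).2 (.inr rfl)
    exact (sum_chordFunctional_parabolaPoint_eq_one_iff hM).1 (hle h)
  · rintro (rfl | rfl)
    · exact subset_convexHull ℝ _ (.inl ⟨i, rfl⟩)
    · exact subset_convexHull ℝ _ (.inr ⟨i, rfl⟩)

theorem injective_joinFace_add [Finite ι] (hM : 0 < M) (e : ι → ℕ) :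
    Function.Injective fun a ↦ joinFace b M a (a + e) := by
  have hmem {a a' : ι → ℕ} (h : joinFace b M a (a + e) = joinFace b M a' (a' + e)) (i : ι) :
      a i = a' i ∨ a i = a' i + e i :=
    (parabolaPoint_mem_joinFace_iff hM).1 (h ▸ (parabolaPoint_mem_joinFace_iff hM).2 (.inl rfl))
  intro a a' h
  ext i
  have h₁ := hmem h i
  have h₂ := hmem h.symm i
  lia

theorem finrank_vectorSpan_joinFace [Fintype ι] [Nonempty ι] (hM : 0 < M) (a c : ι → ℕ) :
    Module.finrank ℝ (vectorSpan ℝ (joinFace b M a c)) + 1 =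
      Fintype.card ι + Fintype.card {i // a i ≠ c i} := by
  let t (i : ι) : ℝ := if a i = c i then a i + 1 else c i
  have hindep : LinearIndependent ℝ (Sum.elim (fun i ↦ parabolaPoint b M i (a i))
      fun i : {i // a i ≠ c i} ↦ parabolaPoint b M i (c i)) := by
    have hst (i : ι) : (a i : ℝ) ≠ t i := by
      by_cases h : a i = c i <;> simp [t, h]
    have ht (i : ι) : 0 ≤ t i := by
      simp only [t]; split_ifs <;> positivity
    have hfull := linearIndependent_parabolaPoint (b := b) hst
      fun i ↦ (add_pos_of_pos_of_nonneg hM (mul_nonneg (a i).cast_nonneg (ht i))).ne'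
    convert hfull.comp (Sum.map id Subtype.val)
      (Sum.map_injective.2 ⟨Function.injective_id, Subtype.val_injective⟩) using 1
    ext (i | ⟨i, hi⟩) <;> simp [t, *]
  have hrange : Set.range (fun i ↦ parabolaPoint b M i (a i)) ∪
      Set.range (fun i ↦ parabolaPoint b M i (c i)) =
      Set.range (Sum.elim (fun i ↦ parabolaPoint b M i (a i))
        fun i : {i // a i ≠ c i} ↦ parabolaPoint b M i (c i)) := by
    rw [Set.Sum.elim_range]
    refine (Set.union_subset Set.subset_union_left ?_).antisymm
      (Set.union_subset_union_right _ ?_)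
    · rintro _ ⟨i, rfl⟩
      by_cases h : a i = c i
      · exact .inl ⟨i, by simp only [h]⟩
      · exact .inr ⟨⟨i, h⟩, rfl⟩
    · rintro _ ⟨i, rfl⟩
      exact ⟨i, rfl⟩
  rw [joinFace, ← direction_affineSpan, affineSpan_convexHull, direction_affineSpan, hrange,
    hindep.affineIndependent.finrank_vectorSpan_add_one, Fintype.card_sum]

theorem span_parabolaPoints [Finite ι] (hM : 0 < M) (hzero : ∀ i, (i, 0) ∈ A)
    (hone : ∀ i, (i, 1) ∈ A) : Submodule.span ℝ (parabolaPoints b M A) = ⊤ := by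
  cases nonempty_fintype ι
  have := b.finiteDimensional_of_finite
  have hindep : LinearIndependent ℝ (Sum.elim (fun i ↦ parabolaPoint b M i 0)
      fun i ↦ parabolaPoint b M i 1) :=
    linearIndependent_parabolaPoint (fun _ ↦ zero_ne_one) fun _ ↦ by simpa using hM.ne'
  refine top_unique ((hindep.span_eq_top_of_card_eq_finrank'
    (Module.finrank_eq_card_basis b).symm).symm.trans_le (Submodule.span_mono ?_))
  rintro _ ⟨i | i, rfl⟩
  · exact ⟨_, hzero i, by simp⟩
  · exact ⟨_, hone i, by simp⟩

theorem affineSpan_symmHull_parabolaPoints [Fintype ι] [Nonempty ι] (hM : 0 < M) {m : ℕ}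
    (hm : 0 < m) (hmA : Finset.univ ×ˢ Finset.range (m + 1) ⊆ A) :
    affineSpan ℝ (symmHull (parabolaPoints b M A)) = ⊤ := by
  have hmem (i : ι) {t : ℕ} (ht : t < m + 1) : (i, t) ∈ A := hmA (by simpa using ht)
  exact affineSpan_symmHull_eq_top
    (Set.Nonempty.image _ ⟨_, hmem (Classical.arbitrary ι) m.lt_succ_self⟩)
    (span_parabolaPoints hM (fun i ↦ hmem i (by lia)) fun i ↦ hmem i (by lia))

end Parabola

section ParabolaPolytope

variable {ι E : Type*} [NormedAddCommGroup E] [NormedSpace ℝ E] [FiniteDimensional ℝ E]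
  {b : Module.Basis (ι ⊕ ι) ℝ E} {M : ℝ} {A : Finset (ι × ℕ)}

theorem ncard_extremePoints_symmHull_parabolaPoints (hM : 0 < M)
    (hA : ∀ p ∈ A, (p.2 : ℝ) ^ 2 ≤ M) :
    (Set.extremePoints ℝ (symmHull (parabolaPoints b M A))).ncard = 2 * A.card := by
  rw [ncard_extremePoints_symmHull finite_parabolaPoints, ncard_parabolaPoints hM]
  rintro _ ⟨⟨i, t⟩, -, rfl⟩
  refine ⟨(chordFunctional b M i t t).toContinuousLinearMap, fun y hy ↦
    ⟨chordFunctional_mem_Icc hM hA i t hy, ?_⟩⟩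
  obtain ⟨⟨i', r⟩, -, rfl⟩ := hy
  exact (chordFunctional_parabolaPoint_eq_one_iff hM).trans
    (Prod.mk_inj.symm.trans (injective_parabolaPoint hM).eq_iff.symm)

theorem isExposed_joinFace [Finite ι] (hM : 0 < M) (hA : ∀ p ∈ A, (p.2 : ℝ) ^ 2 ≤ M)
    {a c : ι → ℕ} (hac : ∀ i, a i ≤ c i) (hca : ∀ i, c i ≤ a i + 1) (ha : ∀ i, (i, a i) ∈ A)
    (hc : ∀ i, (i, c i) ∈ A) :
    IsExposed ℝ (symmHull (parabolaPoints b M A)) (joinFace b M a c) := by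
  cases nonempty_fintype ι
  rw [joinFace, ← sep_parabolaPoints_eq hM ha hc]
  exact isExposed_symmHull
    (g := (∑ i, chordFunctional b M i (a i) (c i)).toContinuousLinearMap)
    fun x ↦ sum_chordFunctional_mem_Icc hM hA hac hca

end ParabolaPolytope

theorem pow_le_faceCount_symmHull_parabolaPoints {ι : Type*} [Fintype ι] [Nonempty ι] {d : ℕ}
    {b : Module.Basis (ι ⊕ ι) ℝ (EuclideanSpace ℝ (Fin d))} {M : ℝ} {A : Finset (ι × ℕ)}
    (hM : 0 < M) (hA : ∀ p ∈ A, (p.2 : ℝ) ^ 2 ≤ M) {m : ℕ} (hm : 0 < m)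
    (hmA : Finset.univ ×ˢ Finset.range (m + 1) ⊆ A) {j : ℕ} (hιj : Fintype.card ι ≤ j + 1)
    (hjι : j < 2 * Fintype.card ι) :
    m ^ Fintype.card ι ≤ faceCount (symmHull (parabolaPoints b M A)) j := by
  classical
  have hmem (i : ι) {t : ℕ} (ht : t < m + 1) : (i, t) ∈ A := hmA (by simpa using ht)
  have hspan := affineSpan_symmHull_parabolaPoints (b := b) hM hm hmA
  obtain ⟨J, hJ⟩ : ∃ J : Finset ι, J.card = j + 1 - Fintype.card ι :=
    (Finset.exists_subset_card_eq (s := Finset.univ) (by rw [Finset.card_univ]; lia)).imp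
      fun _ ↦ And.right
  let e (i : ι) : ℕ := if i ∈ J then 1 else 0
  have he (i : ι) : e i ≤ 1 := by simp only [e]; split_ifs <;> lia
  have hcard (a : ι → ℕ) : Fintype.card {i // a i ≠ (a + e) i} = J.card :=
    Fintype.card_of_subtype J fun i ↦ by simp [e]
  have hpow : (Fintype.piFinset fun _ : ι ↦ Finset.range m).card = m ^ Fintype.card ι := by simp
  rw [← hpow, ← Set.ncard_coe_finset]
  refine Set.ncard_le_ncard_of_injOn _ (fun a ha ↦ ?_) (injective_joinFace_add (b := b) hM e).injOn
    ((isCSPolytope_symmHull finite_parabolaPoints).finite_faces hspan j)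
  have ham (i : ι) : a i < m := by simpa using Fintype.mem_piFinset.1 ha i
  have hfinrank := finrank_vectorSpan_joinFace (b := b) hM a (a + e)
  rw [hcard, hJ, Nat.add_sub_of_le hιj] at hfinrank
  exact ⟨isExposed_joinFace hM hA (fun i ↦ Nat.le_add_right _ _)
    (fun i ↦ Nat.add_le_add_left (he i) _) (fun i ↦ hmem i (Nat.lt_succ_of_lt (ham i)))
    (fun i ↦ hmem i (add_lt_add_of_lt_of_le (ham i) (he i))),
    ⟨_, (parabolaPoint_mem_joinFace_iff (i := Classical.arbitrary ι) hM).2 (.inl rfl)⟩,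
    Nat.succ_injective hfinrank⟩

theorem pow_le_fmax {k m h j : ℕ} (hk : 0 < k) (hm : 0 < m) (hmh : k * (m + 1) ≤ h)
    (hkj : k ≤ j + 1) (hjk : j < 2 * k) : m ^ k ≤ fmax (2 * k) (2 * h) j := by
  have : NeZero k := ⟨hk.ne'⟩
  have hh : 0 < h := lt_of_lt_of_le (by positivity) hmh
  obtain ⟨A, hsub, hsup, hA⟩ := Finset.exists_subsuperset_card_eq
    (s := (Finset.univ : Finset (Fin k)) ×ˢ Finset.range (m + 1))
    (t := Finset.univ ×ˢ Finset.range h) (n := h)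
    (Finset.product_subset_product_right (Finset.range_mono (by nlinarith)))
    (by simpa using hmh) (by simpa using Nat.le_mul_of_pos_left h hk)
  have hM : (0 : ℝ) < (h : ℝ) ^ 2 := by positivity
  have hAM : ∀ p ∈ A, (p.2 : ℝ) ^ 2 ≤ (h : ℝ) ^ 2 := fun p hp ↦ by
    have hp : p.2 < h := by simpa using hsup hp
    gcongr
  let b : Module.Basis (Fin k ⊕ Fin k) ℝ (EuclideanSpace ℝ (Fin (2 * k))) :=
    (EuclideanSpace.basisFun _ ℝ).toBasis.reindex
      ((finCongr (two_mul k)).trans finSumFinEquiv.symm)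
  have hspan : affineSpan ℝ (symmHull (parabolaPoints b (h ^ 2) A)) = ⊤ :=
    affineSpan_symmHull_parabolaPoints hM hm hsub
  have hfaces := pow_le_faceCount_symmHull_parabolaPoints (b := b) hM hAM hm hsub
    (by simpa using hkj) (by simpa using hjk)
  have hle := (isCSPolytope_symmHull finite_parabolaPoints).faceCount_le_fmax hspan j
  rw [Fintype.card_fin] at hfaces
  rw [ncard_extremePoints_symmHull_parabolaPoints hM hAM, hA] at hle
  exact hfaces.trans hle

theorem div_two_mul_le_cast_div_sub_one {k h : ℕ} (hk : 0 < k) (hkh : 4 * k ≤ h) :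
    (h : ℝ) / (2 * k) ≤ (h / k - 1 : ℕ) := by
  have hdiv : 4 ≤ h / k := (Nat.le_div_iff_mul_le hk).2 hkh
  have hlt : (h : ℝ) < k * ((h / k : ℕ) + 1) := by exact_mod_cast Nat.lt_mul_div_succ h hk
  have hkR : (0 : ℝ) < k := by exact_mod_cast hk
  have hdivR : (4 : ℝ) ≤ (h / k : ℕ) := by exact_mod_cast hdiv
  rw [Nat.cast_sub (by lia), div_le_iff₀ (by positivity)]
  nlinarith

/-- Theorem 7.1: for fixed even `d = 2k` and `k ≤ j < 2k`, the quantity `fmax(d,n;j)`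
is of order `n^k`: there are constants `γ, Γ > 0` with
`γ n^k ≤ fmax(d,n;j) ≤ Γ n^k` for all sufficiently large even `n`. -/
theorem stmt_17 (k j : ℕ) (hk : 0 < k) (hkj : k ≤ j) (hj : j < 2 * k) :
    ∃ γ Γ : ℝ, 0 < γ ∧ 0 < Γ ∧ ∃ N : ℕ, ∀ n : ℕ, N ≤ n → Even n →
      γ * (n : ℝ) ^ k ≤ (fmax (2 * k) n j : ℝ) ∧
      (fmax (2 * k) n j : ℝ) ≤ Γ * (n : ℝ) ^ k := by
  refine ⟨(1 / (4 * k)) ^ k, 2 * 2 ^ k * 2 ^ (2 * k + 1), by positivity, by positivity, 8 * k,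
    fun n hn heven ↦ ⟨?_, ?_⟩⟩
  · obtain ⟨h, rfl⟩ := even_iff_exists_two_mul.1 heven
    have hm : 4 ≤ h / k := (Nat.le_div_iff_mul_le hk).2 (by lia)
    have hmh : k * (h / k - 1 + 1) ≤ h := by
      rw [Nat.sub_add_cancel (by lia)]
      exact Nat.mul_div_le h k
    calc (1 / (4 * k) : ℝ) ^ k * (2 * h : ℕ) ^ k
        = (h / (2 * k) : ℝ) ^ k := by rw [← mul_pow]; push_cast; ring
      _ ≤ (h / k - 1 : ℕ) ^ k := by gcongr; exact div_two_mul_le_cast_div_sub_one hk (by lia)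
      _ ≤ fmax (2 * k) (2 * h) j := by
        exact_mod_cast pow_le_fmax hk (by lia) hmh (by lia) hj
  · have hn' : (n : ℝ) + 1 ≤ 2 * n := by exact_mod_cast (by lia : n + 1 ≤ 2 * n)
    calc (fmax (2 * k) n j : ℝ) ≤ 2 * (n + 1) ^ k * 2 ^ (2 * k + 1) := by
          exact_mod_cast (show (2 * k + 1) / 2 = k by lia) ▸ fmax_le (2 * k) n j
      _ ≤ 2 * (2 * n) ^ k * 2 ^ (2 * k + 1) := by gcongr
      _ = 2 * 2 ^ k * 2 ^ (2 * k + 1) * n ^ k := by rw [mul_pow]; ring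
end

section
/- Let z_1, …, z_6 ∈ ℂ be distinct points of modulus 1 lying on an arc of the unit circle of length at most arccos(1/8), and let D(z) be a raked self-inversive polynomial of degree 10 such that D(z_j) = 0 for j = 1, …, 6. Then none of the remaining four roots of D (counted with multiplicity) has absolute value 1. -/
open Polynomial

/-- A raked self-inversive polynomial of degree `4k-2`: a complex polynomial of degree
exactly `4k-2` all of whose odd-degree coefficients vanish except possibly the middle
one (degree `2k-1`), and which satisfies `D(z) = z^{4k-2} · conj(D(1/conj z))`. -/
def RakedSelfInversive (k : ℕ) (D : Polynomial ℂ) : Prop :=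
  D.natDegree = 4 * k - 2 ∧ D ≠ 0 ∧
  (∀ i : ℕ, Odd i → i ≠ 2 * k - 1 → D.coeff i = 0) ∧
  (∀ z : ℂ, z ≠ 0 →
    D.eval z = z ^ (4 * k - 2) * (starRingEnd ℂ) (D.eval (((starRingEnd ℂ) z)⁻¹)))

/-!
On the unit circle, `1 - Re (D(z) / (c zᵐ))`, with `c` the coefficient of the middle power `zᵐ`,
is a trigonometric polynomial `S` with odd frequencies of size at most `m`. So `S = 1` at the zeros
of `D` and `S = -1` at their antipodes. In the gnomonic coordinate `u = tan (t - y)` one has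
`S = cos ^ m * q(u)` with `q` a real polynomial of degree at most `m`, and the zeros of `D` in the
half circle around `y` become points where `q` interpolates `f(u) = (1 + u²) ^ (m / 2)`. Here `f` is
explicit enough: its derivative of order `m + 1` is `(m‼)² (1 + u²) ^ (-(m + 2) / 2) > 0`, hence
`f^{(m)}` increases from `-m!` to `m!`.

Suppose `q` interpolates `f` at `m + 1` nodes and consider one more unimodular zero of `D`.
* If it is a node, counting zeros of successive derivatives contradicts `f^{(m+1)} > 0`.
* If it or its antipode lies between two nodes, take it as `u = 0`. The interpolation error there is
  `1 - q(0) = κ ∏ xᵢ` with `0 < κ ≤ 1/2`, whereas `q(0) = ±1` would make the error `0` or `2`. This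
  is impossible because `0 ≠ ∏ xᵢ < 4` on an arc of length `ℓ` with
  `nⁿ ≤ 2 (n + 1)ⁿ⁺¹ cosⁿ ℓ`, where `m = 2n + 3`; for `m = 5` this says `cos ℓ ≥ 1/8`.
* Otherwise send it to `u = ∞`. Then the leading coefficient of `q` is `±1`, but it is also
  `f^{(m)}(ξ) / m!` for some `ξ`, which lies strictly between `-1` and `1`.
-/

open Filter Real
open scoped Nat Topology

/-! ### Zeros of derivatives and the interpolation error -/

lemma exists_finset_deriv_eq_zero {f : ℝ → ℝ} (hf : Differentiable ℝ f) {s : Finset ℝ}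
    (hs : ∀ x ∈ s, f x = 0) :
    ∃ t : Finset ℝ, (∀ x ∈ t, deriv f x = 0) ∧ Disjoint s t ∧ s.card ≤ t.card + 1 := by
  have rolle : ∀ x ∈ s, ∀ y ∈ s, x < y → ∃ ξ ∈ Set.Ioo x y, deriv f ξ = 0 :=
    fun x hx y hy hxy ↦ exists_deriv_eq_zero hxy hf.continuous.continuousOn
      ((hs x hx).trans (hs y hy).symm)
  choose! ξ hξ hξ0 using rolle
  let t := ((s ×ˢ s).filter fun p ↦ p.1 < p.2).image fun p ↦ ξ p.1 p.2
  refine ⟨t \ s, fun x hx ↦ ?_, Finset.disjoint_sdiff,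
    Finset.card_le_sdiff_of_interleaved fun x hx y hy hxy _ ↦ ⟨ξ x y, ?_, hξ x hx y hy hxy⟩⟩
  · obtain ⟨⟨a, b⟩, hab, rfl⟩ := Finset.mem_image.1 (Finset.mem_sdiff.1 hx).1
    simp only [Finset.mem_filter, Finset.mem_product] at hab
    exact hξ0 a hab.1.1 b hab.1.2 hab.2
  · exact Finset.mem_image.2 ⟨(x, y), by simp [hx, hy, hxy], rfl⟩

lemma exists_iteratedDeriv_eq_zero {n : ℕ} {f : ℝ → ℝ} (hf : ContDiff ℝ n f) {s : Finset ℝ}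
    (hn : n < s.card) (hs : ∀ x ∈ s, f x = 0) : ∃ ξ, iteratedDeriv n f ξ = 0 := by
  induction n generalizing f s with
  | zero =>
    obtain ⟨x, hx⟩ := Finset.card_pos.1 hn
    exact ⟨x, by simpa using hs x hx⟩
  | succ n ih =>
    obtain ⟨t, ht, -, hst⟩ := exists_finset_deriv_eq_zero (hf.differentiable (by simp)) hs
    rw [iteratedDeriv_succ']
    exact ih (contDiff_succ_iff_deriv.1 hf).2.2 (by lia) ht

lemma exists_iteratedDeriv_succ_eq_zero_of_deriv_eq_zero {n : ℕ} {f : ℝ → ℝ}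
    (hf : ContDiff ℝ (n + 1) f) {s : Finset ℝ} (hn : n < s.card) (hs : ∀ x ∈ s, f x = 0) {y : ℝ}
    (hy : y ∈ s) (hfy : deriv f y = 0) : ∃ ξ, iteratedDeriv (n + 1) f ξ = 0 := by
  obtain ⟨t, ht, hdisj, hst⟩ := exists_finset_deriv_eq_zero (hf.differentiable (by simp)) hs
  have hyt : y ∉ t := Finset.disjoint_left.1 hdisj hy
  rw [iteratedDeriv_succ']
  refine exists_iteratedDeriv_eq_zero (contDiff_succ_iff_deriv.1 hf).2.2 (s := insert y t) ?_ ?_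
  · rw [Finset.card_insert_of_notMem hyt]
    lia
  · simpa [hfy] using ht

lemma iteratedDeriv_eval (q : ℝ[X]) (n : ℕ) :
    iteratedDeriv n (fun x ↦ q.eval x) = fun x ↦ (derivative^[n] q).eval x := by
  induction n with
  | zero => simp
  | succ n ih => ext x; simp [iteratedDeriv_succ, ih, Function.iterate_succ_apply']

lemma iteratedDeriv_eval_of_natDegree_le {q : ℝ[X]} {n : ℕ} (hq : q.natDegree ≤ n) (x : ℝ) :
    iteratedDeriv n (fun x ↦ q.eval x) x = n ! * q.coeff n := by
  have hdeg : (derivative^[n] q).natDegree ≤ 0 :=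
    (natDegree_iterate_derivative q n).trans (by lia)
  rw [iteratedDeriv_eval, eq_C_of_natDegree_le_zero hdeg, coeff_iterate_derivative]
  simp [Nat.descFactorial_self]

lemma iteratedDeriv_sub_eval {f : ℝ → ℝ} {q : ℝ[X]} {n : ℕ} (hf : ContDiff ℝ n f)
    (hq : q.natDegree ≤ n) (x : ℝ) :
    iteratedDeriv n (fun x ↦ f x - q.eval x) x = iteratedDeriv n f x - n ! * q.coeff n := by
  rw [← iteratedDeriv_eval_of_natDegree_le hq x]
  exact iteratedDeriv_fun_sub hf.contDiffAt (q.contDiff_aeval n).contDiffAt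

lemma exists_iteratedDeriv_eq_factorial_mul_coeff {f : ℝ → ℝ} {q : ℝ[X]} {n : ℕ}
    (hf : ContDiff ℝ n f) (hq : q.natDegree ≤ n) {s : Finset ℝ} (hn : n < s.card)
    (hs : ∀ x ∈ s, q.eval x = f x) : ∃ ξ, iteratedDeriv n f ξ = n ! * q.coeff n := by
  obtain ⟨ξ, hξ⟩ := exists_iteratedDeriv_eq_zero (hf.sub (q.contDiff_aeval n)) hn
    fun x hx ↦ sub_eq_zero.2 (hs x hx).symm
  exact ⟨ξ, sub_eq_zero.1 ((iteratedDeriv_sub_eval hf hq ξ).symm.trans hξ)⟩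

lemma exists_sub_eval_eq_iteratedDeriv_mul_prod {f : ℝ → ℝ} {q : ℝ[X]} {s : Finset ℝ}
    (hf : ContDiff ℝ s.card f) (hq : q.natDegree < s.card) (hs : ∀ x ∈ s, q.eval x = f x) {a : ℝ}
    (ha : a ∉ s) :
    ∃ ξ, f a - q.eval a = iteratedDeriv s.card f ξ / s.card ! * ∏ x ∈ s, (a - x) := by
  set M : ℝ[X] := ∏ x ∈ s, (X - C x) with hM
  have hMa : M.eval a = ∏ x ∈ s, (a - x) := by simp [hM, eval_prod]
  have hMa0 : M.eval a ≠ 0 := by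
    rw [hMa, Finset.prod_ne_zero_iff]
    exact fun x hx ↦ sub_ne_zero.2 (ne_of_mem_of_not_mem hx ha).symm
  have hMs : ∀ x ∈ s, M.eval x = 0 := fun x hx ↦ by
    rw [hM, eval_prod]
    exact Finset.prod_eq_zero hx (by simp)
  have hMdeg : M.natDegree = s.card := by simp [hM]
  have hMlead : M.coeff s.card = 1 := by
    rw [← hMdeg]
    exact monic_prod_X_sub_C id s
  set κ := (f a - q.eval a) / M.eval a with hκ
  have hPdeg : (q + C κ * M).natDegree ≤ s.card :=
    natDegree_add_le_of_degree_le hq.le ((natDegree_C_mul_le _ _).trans hMdeg.le)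
  have hPs : ∀ x ∈ insert a s, (q + C κ * M).eval x = f x := by
    intro x hx
    rcases Finset.mem_insert.1 hx with rfl | hx
    · simp [hκ, hMa0]
    · simp [hMs x hx, hs x hx]
  obtain ⟨ξ, hξ⟩ := exists_iteratedDeriv_eq_factorial_mul_coeff hf hPdeg
    (by rw [Finset.card_insert_of_notMem ha]; lia) hPs
  rw [coeff_add, coeff_C_mul, hMlead, coeff_eq_zero_of_natDegree_lt hq] at hξ
  refine ⟨ξ, ?_⟩
  rw [hξ, ← hMa, hκ]
  field_simp
  ring

/-! ### Powers of the secant -/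

/-- `√(1 + u²) ^ m`, which is `sec x ^ m` in the coordinate `u = tan x`. -/
noncomputable def secPow (m : ℤ) (u : ℝ) : ℝ := √(1 + u ^ 2) ^ m

lemma secPow_eq_cos_arctan_zpow (m : ℤ) (u : ℝ) : secPow m u = cos (arctan u) ^ (-m) := by
  rw [secPow, cos_arctan, one_div, inv_zpow, zpow_neg, inv_inv]

lemma secPow_tan (m : ℤ) {x : ℝ} (hx : 0 < cos x) :
    secPow m (tan x) = (cos x ^ m)⁻¹ := by
  rw [secPow, ← inv_inv √(1 + tan x ^ 2), inv_sqrt_one_add_tan_sq hx, inv_zpow]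

lemma secPow_pos (m : ℤ) (u : ℝ) : 0 < secPow m u := zpow_pos (sqrt_pos.2 (by positivity)) m

lemma secPow_neg_apply (m : ℤ) (u : ℝ) : secPow m (-u) = secPow m u := by
  rw [secPow, neg_sq, secPow]

lemma secPow_sub_two (m : ℤ) (u : ℝ) : secPow m u = (1 + u ^ 2) * secPow (m - 2) u := by
  have hpos : 0 < 1 + u ^ 2 := by positivity
  rw [secPow, secPow, zpow_sub₀ (sqrt_pos.2 hpos).ne', zpow_ofNat, sq_sqrt hpos.le]
  field_simp

lemma contDiff_secPow (m : ℤ) {n : WithTop ℕ∞} : ContDiff ℝ n (secPow m) := by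
  have hsqrt : ContDiff ℝ n fun u : ℝ ↦ √(1 + u ^ 2) :=
    (contDiff_const.add (contDiff_id.pow 2)).sqrt fun u ↦ by positivity
  cases m with
  | ofNat m => simpa +unfoldPartialApp [secPow, Pi.inv_def] using hsqrt.pow m
  | negSucc m =>
    simpa +unfoldPartialApp [secPow, Pi.inv_def] using (hsqrt.pow (m + 1)).inv fun u ↦ by positivity

lemma hasDerivAt_secPow (m : ℤ) (u : ℝ) :
    HasDerivAt (secPow m) (m * u * secPow (m - 2) u) u := by
  have hpos : 0 < √(1 + u ^ 2) := sqrt_pos.2 (by positivity)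
  have hsqrt : HasDerivAt (fun u : ℝ ↦ √(1 + u ^ 2)) (u / √(1 + u ^ 2)) u := by
    convert ((hasDerivAt_pow 2 u).const_add 1).sqrt (by positivity) using 1
    field
  refine ((hasDerivAt_zpow m _ (.inl hpos.ne')).comp u hsqrt).congr_deriv ?_
  rw [secPow, show m - 2 = m - 1 - 1 by ring, zpow_sub_one₀ hpos.ne' (m - 1)]
  field

lemma deriv_secPow (m : ℤ) : deriv (secPow m) = fun u ↦ m * u * secPow (m - 2) u :=
  funext fun u ↦ (hasDerivAt_secPow m u).deriv

lemma hasDerivAt_id_mul_secPow (m : ℤ) (u : ℝ) :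
    HasDerivAt (fun u ↦ u * secPow m u) (secPow m u + m * u ^ 2 * secPow (m - 2) u) u := by
  refine ((hasDerivAt_id u).mul (hasDerivAt_secPow m u)).congr_deriv ?_
  rw [id]
  ring

lemma deriv_deriv_secPow (m : ℤ) :
    deriv (deriv (secPow m)) = fun u ↦ m * (1 + (m - 1) * u ^ 2) * secPow (m - 4) u := by
  ext u
  simp only [deriv_secPow, mul_assoc]
  rw [((hasDerivAt_id_mul_secPow (m - 2) u).const_mul (m : ℝ)).deriv, secPow_sub_two (m - 2),
    show m - 2 - 2 = m - 4 by ring]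
  push_cast
  ring

lemma one_add_sq_mul_deriv_deriv_secPow (m : ℤ) (u : ℝ) :
    (1 + u ^ 2) * deriv (deriv (secPow m)) u + 2 * (1 - m) * u * deriv (secPow m) u -
      m * (1 - m) * secPow m u = m ^ 2 * secPow (m - 2) u := by
  rw [deriv_deriv_secPow]
  simp only [deriv_secPow]
  rw [secPow_sub_two m, secPow_sub_two (m - 2), show m - 2 - 2 = m - 4 by ring]
  ring

lemma iteratedDeriv_one_add_sq_mul {g : ℝ → ℝ} {n : ℕ} (hg : ContDiff ℝ (n + 2 : ℕ) g) (x : ℝ) :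
    iteratedDeriv (n + 2) (fun x ↦ (1 + x ^ 2) * g x) x =
      (1 + x ^ 2) * iteratedDeriv (n + 2) g x + 2 * (n + 2) * x * iteratedDeriv (n + 1) g x +
        (n + 2) * (n + 1) * iteratedDeriv n g x := by
  have hderiv : ∀ i, iteratedDeriv (i + 1) (fun x : ℝ ↦ 1 + x ^ 2) x =
      Nat.descFactorial 2 (i + 1) * x ^ (2 - (i + 1)) := fun i ↦ by
    simp only [iteratedDeriv_succ', deriv_const_add', ← iteratedDeriv_pow]
  have hchoose : ((n + 2).choose 2 : ℝ) * 2 = (n + 2) * (n + 1) := by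
    rw [Nat.cast_choose_two]
    push_cast
    ring
  rw [iteratedDeriv_fun_mul (by fun_prop) hg.contDiffAt, Finset.sum_range_succ',
    Finset.sum_range_succ', Finset.sum_range_succ', Finset.sum_eq_zero fun i _ ↦ ?_]
  · simp only [hderiv, iteratedDeriv_zero, Nat.descFactorial, Nat.choose_zero_right, zero_add,
      Nat.choose_one_right, Nat.add_sub_cancel_right]
    push_cast
    linear_combination iteratedDeriv n g x * hchoose
  · rw [hderiv, Nat.descFactorial_eq_zero_iff_lt.2 (by lia), Nat.cast_zero, zero_mul, mul_zero,
      zero_mul]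

lemma iteratedDeriv_add_two_secPow_add_two (m : ℤ) (n : ℕ) (u : ℝ) :
    iteratedDeriv (n + 2) (secPow (m + 2)) u =
      (1 + u ^ 2) * iteratedDeriv (n + 2) (secPow m) u +
        2 * (n + 2) * u * iteratedDeriv (n + 1) (secPow m) u +
        (n + 2) * (n + 1) * iteratedDeriv n (secPow m) u := by
  rw [← iteratedDeriv_one_add_sq_mul (contDiff_secPow m)]
  congr 1
  ext u
  rw [secPow_sub_two, add_sub_cancel_right]

lemma iteratedDeriv_secPow (n : ℕ) :
    iteratedDeriv (2 * n + 2) (secPow (2 * n + 1)) =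
      fun u ↦ ((2 * n + 1)‼ : ℝ) ^ 2 * secPow (-(2 * n + 3)) u := by
  induction n with
  | zero =>
    ext u
    simp [iteratedDeriv_succ, deriv_deriv_secPow]
  | succ n ih =>
    ext u
    have ih_deriv : iteratedDeriv (2 * n + 3) (secPow (2 * n + 1)) =
        fun u ↦ ((2 * n + 1)‼ : ℝ) ^ 2 * deriv (secPow (-(2 * n + 3))) u := by
      ext u
      rw [iteratedDeriv_succ, ih, deriv_const_mul_field]
    have ih_deriv_two : iteratedDeriv (2 * n + 4) (secPow (2 * n + 1)) u =
        ((2 * n + 1)‼ : ℝ) ^ 2 * deriv (deriv (secPow (-(2 * n + 3)))) u := by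
      rw [iteratedDeriv_succ, ih_deriv, deriv_const_mul_field]
    have hode := one_add_sq_mul_deriv_deriv_secPow (-(2 * n + 3)) u
    rw [show (2 * ((n + 1 : ℕ) : ℤ) + 1) = 2 * n + 1 + 2 by push_cast; ring,
      show 2 * (n + 1) + 2 = (2 * n + 2) + 2 by ring,
      iteratedDeriv_add_two_secPow_add_two, ih, ih_deriv, ih_deriv_two,
      show 2 * (n + 1) + 1 = 2 * n + 1 + 2 by ring, Nat.doubleFactorial_add_two,
      show -(2 * ((n + 1 : ℕ) : ℤ) + 3) = -(2 * n + 3) - 2 by push_cast; ring]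
    push_cast at hode ⊢
    linear_combination ((2 * n + 1)‼ : ℝ) ^ 2 * hode

lemma iteratedDeriv_secPow_succ (n : ℕ) (u : ℝ) :
    iteratedDeriv (2 * n + 3) (secPow (2 * n + 3)) u =
      (2 * n + 3) * ((2 * n + 1)‼ : ℝ) ^ 2 * (u * secPow (-(2 * n + 3)) u) +
        (2 * n + 3) * (2 * n + 2) * iteratedDeriv (2 * n + 1) (secPow (2 * n + 1)) u := by
  have hderiv : (1 + u ^ 2) * iteratedDeriv (2 * n + 3) (secPow (2 * n + 1)) u =
      -(2 * n + 3) * ((2 * n + 1)‼ : ℝ) ^ 2 * (u * secPow (-(2 * n + 3)) u) := by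
    rw [iteratedDeriv_succ, iteratedDeriv_secPow, deriv_const_mul_field, deriv_secPow,
      secPow_sub_two (-(2 * n + 3))]
    push_cast
    ring
  have hrec := iteratedDeriv_add_two_secPow_add_two (2 * n + 1) (2 * n + 1) u
  rw [hderiv, iteratedDeriv_secPow, show (2 * n + 1 + 2 : ℤ) = 2 * n + 3 by ring] at hrec
  refine hrec.trans ?_
  push_cast
  ring

lemma tendsto_id_mul_secPow_atTop (k : ℕ) :
    Tendsto (fun u ↦ u * secPow (-(k + 1)) u) atTop (𝓝 (0 ^ k)) := by
  have harctan : Tendsto arctan atTop (𝓝 (π / 2)) :=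
    tendsto_arctan_atTop.mono_right nhdsWithin_le_nhds
  have hprod := ((continuous_sin.tendsto _).comp harctan).mul
    (((continuous_cos.tendsto _).comp harctan).pow k)
  simp only [sin_pi_div_two, cos_pi_div_two, one_mul] at hprod
  refine hprod.congr fun u ↦ ?_
  have htan : tan (arctan u) = u := tan_arctan u
  rw [tan_eq_sin_div_cos, div_eq_iff (cos_arctan_pos u).ne'] at htan
  rw [secPow_eq_cos_arctan_zpow, neg_neg]
  norm_cast
  simp only [Function.comp_apply, htan]
  ring

lemma tendsto_iteratedDeriv_secPow_atTop (n : ℕ) :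
    Tendsto (iteratedDeriv (2 * n + 1) (secPow (2 * n + 1))) atTop (𝓝 (2 * n + 1)!) := by
  induction n with
  | zero => simpa [deriv_secPow] using tendsto_id_mul_secPow_atTop 0
  | succ n ih =>
    have hlim := ((tendsto_id_mul_secPow_atTop (2 * n + 2)).const_mul
      ((2 * n + 3) * ((2 * n + 1)‼ : ℝ) ^ 2)).add
        (ih.const_mul ((2 * n + 3 : ℝ) * (2 * n + 2)))
    rw [show -(((2 * n + 2 : ℕ) : ℤ) + 1) = -(2 * n + 3) by push_cast; ring] at hlim
    convert hlim using 2 with u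
    · exact_mod_cast iteratedDeriv_secPow_succ n u
    · rw [show 2 * (n + 1) + 1 = 2 * n + 1 + 1 + 1 by ring, Nat.factorial_succ, Nat.factorial_succ]
      push_cast
      ring

lemma strictMono_iteratedDeriv_secPow (n : ℕ) :
    StrictMono (iteratedDeriv (2 * n + 1) (secPow (2 * n + 1))) := by
  refine strictMono_of_deriv_pos fun u ↦ ?_
  rw [← iteratedDeriv_succ, iteratedDeriv_secPow]
  have := secPow_pos (-(2 * n + 3)) u
  positivity

lemma abs_iteratedDeriv_secPow_lt (n : ℕ) (u : ℝ) :
    |iteratedDeriv (2 * n + 1) (secPow (2 * n + 1)) u| < (2 * n + 1)! := by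
  have hlt : ∀ u, iteratedDeriv (2 * n + 1) (secPow (2 * n + 1)) u < (2 * n + 1)! := fun u ↦
    (strictMono_iteratedDeriv_secPow n (lt_add_one u)).trans_le
      ((strictMono_iteratedDeriv_secPow n).monotone.ge_of_tendsto
        (tendsto_iteratedDeriv_secPow_atTop n) _)
  have hodd : iteratedDeriv (2 * n + 1) (secPow (2 * n + 1)) (-u) =
      -iteratedDeriv (2 * n + 1) (secPow (2 * n + 1)) u := by
    have hneg := iteratedDeriv_comp_neg (2 * n + 1) (secPow (2 * n + 1)) u
    simp only [secPow_neg_apply, Odd.neg_one_pow ⟨n, rfl⟩, neg_smul, one_smul] at hneg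
    exact neg_eq_iff_eq_neg.1 hneg.symm
  exact abs_lt.2 ⟨by linarith [hlt (-u)], hlt u⟩

lemma two_mul_doubleFactorial_sq_le_factorial (n : ℕ) :
    2 * (2 * n + 1)‼ ^ 2 ≤ (2 * n + 2)! := by
  induction n with
  | zero => simp
  | succ n ih =>
    rw [show 2 * (n + 1) + 1 = 2 * n + 1 + 2 by ring,
      show 2 * (n + 1) + 2 = 2 * n + 2 + 1 + 1 by ring, Nat.doubleFactorial_add_two,
      Nat.factorial_succ, Nat.factorial_succ]
    calc 2 * ((2 * n + 1 + 2) * (2 * n + 1)‼) ^ 2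
        = (2 * n + 3) * ((2 * n + 3) * (2 * (2 * n + 1)‼ ^ 2)) := by ring
      _ ≤ (2 * n + 3 + 1) * ((2 * n + 3) * (2 * n + 2)!) :=
          Nat.mul_le_mul (by lia) (Nat.mul_le_mul_left _ ih)

section Interpolation

variable {n : ℕ} {q : ℝ[X]} {s : Finset ℝ}

lemma abs_coeff_lt_one_of_eval_eq_secPow (hq : q.natDegree ≤ 2 * n + 1) (hcard : 2 * n + 1 < s.card)
    (hs : ∀ x ∈ s, q.eval x = secPow (2 * n + 1) x) : |q.coeff (2 * n + 1)| < 1 := by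
  obtain ⟨ξ, hξ⟩ := exists_iteratedDeriv_eq_factorial_mul_coeff (contDiff_secPow _) hq hcard hs
  have hlt := abs_iteratedDeriv_secPow_lt n ξ
  rw [hξ, abs_mul, Nat.abs_cast] at hlt
  exact lt_of_mul_lt_mul_left (hlt.trans_eq (mul_one _).symm) (Nat.cast_nonneg _)

lemma deriv_secPow_sub_eval_ne_zero (hq : q.natDegree ≤ 2 * n + 1) (hcard : 2 * n + 1 < s.card)
    (hs : ∀ x ∈ s, q.eval x = secPow (2 * n + 1) x) {y : ℝ} (hy : y ∈ s) :
    deriv (fun u ↦ secPow (2 * n + 1) u - q.eval u) y ≠ 0 := by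
  intro hderiv
  obtain ⟨ξ, hξ⟩ := exists_iteratedDeriv_succ_eq_zero_of_deriv_eq_zero
    ((contDiff_secPow _).sub (q.contDiff_aeval _)) hcard
    (fun x hx ↦ sub_eq_zero.2 (hs x hx).symm) hy hderiv
  have hsub := iteratedDeriv_sub_eval (contDiff_secPow (2 * n + 1))
    (hq.trans (Nat.le_succ _)) ξ
  rw [coeff_eq_zero_of_natDegree_lt (by lia), iteratedDeriv_secPow, mul_zero, sub_zero] at hsub
  have hpos := secPow_pos (-(2 * n + 3)) ξ
  refine absurd (hsub.symm.trans hξ) ?_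
  positivity

lemma exists_one_sub_eval_zero_eq_mul_prod (hq : q.natDegree ≤ 2 * n + 1)
    (hcard : s.card = 2 * n + 2) (hs : ∀ x ∈ s, q.eval x = secPow (2 * n + 1) x) (hs0 : 0 ∉ s) :
    ∃ κ ∈ Set.Ioc (0 : ℝ) (1 / 2), 1 - q.eval 0 = κ * ∏ x ∈ s, x := by
  obtain ⟨ξ, hξ⟩ := exists_sub_eval_eq_iteratedDeriv_mul_prod
    (contDiff_secPow (2 * n + 1)) (by lia) hs hs0
  have heven : ∏ x ∈ s, (0 - x) = ∏ x ∈ s, x := by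
    have hsign : (-1 : ℝ) ^ (2 * n + 2) = 1 := Even.neg_one_pow ⟨n + 1, by ring⟩
    simp only [zero_sub]
    rw [Finset.prod_neg, hcard, hsign, one_mul]
  have hzero : secPow (2 * n + 1) 0 = 1 := by simp [secPow]
  rw [heven, hcard, iteratedDeriv_secPow, hzero] at hξ
  refine ⟨_, ⟨?_, ?_⟩, hξ⟩
  · have := secPow_pos (-(2 * n + 3)) ξ
    positivity
  · have hle : secPow (-(2 * n + 3)) ξ ≤ 1 := by
      rw [secPow_eq_cos_arctan_zpow, neg_neg]
      exact_mod_cast pow_le_one₀ (cos_arctan_pos ξ).le (cos_le_one _) (n := 2 * n + 3)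
    have hfac : (2 : ℝ) * ((2 * n + 1)‼ : ℝ) ^ 2 ≤ (2 * n + 2)! :=
      mod_cast two_mul_doubleFactorial_sq_le_factorial n
    rw [div_le_div_iff₀ (by positivity) two_pos]
    nlinarith [sq_nonneg ((2 * n + 1)‼ : ℝ)]

end Interpolation

/-! ### The product of the nodes -/

section ProductBound

lemma succ_pow_mul_pow_mul_one_sub_le {a : ℝ} (ha : 0 ≤ a) (n : ℕ) :
    (n + 1 : ℝ) ^ (n + 1) * (a ^ n * (1 - a)) ≤ (n : ℝ) ^ n := by
  rcases n.eq_zero_or_pos with rfl | hn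
  · simpa using ha
  rcases ha.eq_or_lt with rfl | ha
  · simp [hn.ne']
  have hn' : (0 : ℝ) < n := mod_cast hn
  have hbernoulli := one_add_mul_sub_le_pow
    (show -1 ≤ n / ((n + 1) * a) by linarith [show 0 ≤ n / ((n + 1) * a) by positivity]) (n + 1)
  rw [div_pow, mul_pow, le_div_iff₀ (by positivity)] at hbernoulli
  refine le_of_mul_le_mul_left ?_ hn'
  calc n * ((n + 1 : ℝ) ^ (n + 1) * (a ^ n * (1 - a)))
      = (1 + (n + 1 : ℕ) * (n / ((n + 1) * a) - 1)) * ((n + 1) ^ (n + 1) * a ^ (n + 1)) := by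
        push_cast
        field
    _ ≤ n * (n : ℝ) ^ n := hbernoulli.trans_eq (pow_succ' _ _)

variable {n : ℕ} {p r δ : ℝ}

lemma mul_pow_succ_lt_two (hp : 0 < p) (hr : 0 < r) (hδ : 0 < δ)
    (hn : (n : ℝ) ^ n ≤ 2 * (n + 1) ^ (n + 1) * δ ^ n) (hpr : δ * (p + r) ≤ 1 - p * r) :
    p * r ^ (n + 1) < 2 := by
  have hlt : p * r < 1 - δ * r := by nlinarith
  have hpos : (0 : ℝ) < (n + 1 : ℝ) ^ (n + 1) * δ ^ n := by positivity
  refine lt_of_mul_lt_mul_left ?_ hpos.le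
  calc (n + 1 : ℝ) ^ (n + 1) * δ ^ n * (p * r ^ (n + 1))
      = (n + 1) ^ (n + 1) * ((δ * r) ^ n * (p * r)) := by ring
    _ < (n + 1) ^ (n + 1) * ((δ * r) ^ n * (1 - δ * r)) := by gcongr
    _ ≤ (n : ℝ) ^ n := succ_pow_mul_pow_mul_one_sub_le (by positivity) n
    _ ≤ (n + 1) ^ (n + 1) * δ ^ n * 2 := hn.trans_eq (by ring)

lemma pow_succ_mul_pow_succ_lt_two (hp : 0 < p) (hr : 0 < r) (hδ : 0 < δ)
    (hn : (n : ℝ) ^ n ≤ 2 * (n + 1) ^ (n + 1) * δ ^ n) (hpr : δ * (p + r) ≤ 1 - p * r)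
    {i j : ℕ} (hij : i + j = n) : p ^ (i + 1) * r ^ (j + 1) < 2 := by
  wlog hle : p ≤ r generalizing p r i j
  · rw [mul_comm]
    exact this hr hp (by linarith) (by lia) (le_of_not_ge hle)
  calc p ^ (i + 1) * r ^ (j + 1) = p * (p ^ i * r ^ (j + 1)) := by ring
    _ ≤ p * (r ^ i * r ^ (j + 1)) := by gcongr
    _ = p * r ^ (n + 1) := by rw [← pow_add, ← hij, add_assoc]
    _ < 2 := mul_pow_succ_lt_two hp hr hδ hn hpr

lemma prod_eq_neg_one_pow_mul_prod_neg_mul_prod (s : Finset ℝ) :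
    ∏ x ∈ s, x =
      (-1) ^ (s.filter (· < 0)).card * ((∏ x ∈ s with x < 0, -x) * ∏ x ∈ s with ¬x < 0, x) := by
  rw [Finset.prod_neg, ← mul_assoc, ← mul_assoc, ← mul_pow, neg_one_mul, neg_neg, one_pow, one_mul,
    Finset.prod_filter_mul_prod_filter_not]

lemma prod_neg_mul_prod_nonneg (s : Finset ℝ) :
    0 ≤ (∏ x ∈ s with x < 0, -x) * ∏ x ∈ s with ¬x < 0, x :=
  mul_nonneg (Finset.prod_nonneg fun _ hx ↦ neg_nonneg.2 (Finset.mem_filter.1 hx).2.le)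
    (Finset.prod_nonneg fun _ hx ↦ not_lt.1 (Finset.mem_filter.1 hx).2)

lemma prod_neg_mul_prod_le_pow_mul_pow {s : Finset ℝ} (hp : ∀ x ∈ s, -p ≤ x)
    (hr : ∀ x ∈ s, x ≤ r) :
    (∏ x ∈ s with x < 0, -x) * ∏ x ∈ s with ¬x < 0, x ≤
      p ^ (s.filter (· < 0)).card * r ^ (s.filter (¬· < 0)).card := by
  have hneg : ∀ x ∈ s.filter (· < 0), 0 ≤ -x ∧ -x ≤ p := fun x hx ↦ by
    have := Finset.mem_filter.1 hx
    exact ⟨by linarith, by linarith [hp x this.1]⟩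
  have hpos : ∀ x ∈ s.filter (¬· < 0), 0 ≤ x ∧ x ≤ r := fun x hx ↦ by
    have := Finset.mem_filter.1 hx
    exact ⟨not_lt.1 this.2, hr x this.1⟩
  rw [← Finset.prod_const, ← Finset.prod_const]
  exact mul_le_mul
    (Finset.prod_le_prod (fun x hx ↦ (hneg x hx).1) fun x hx ↦ (hneg x hx).2)
    (Finset.prod_le_prod (fun x hx ↦ (hpos x hx).1) fun x hx ↦ (hpos x hx).2)
    (Finset.prod_nonneg fun x hx ↦ (hpos x hx).1)
    (Finset.prod_nonneg fun x hx ↦ (hneg x hx).1.trans (hneg x hx).2)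

lemma prod_lt_four {s : Finset ℝ} (hcard : s.card = 2 * (n + 2)) (hδ : 0 < δ)
    (hn : (n : ℝ) ^ n ≤ 2 * (n + 1) ^ (n + 1) * δ ^ n)
    (hs : ∀ x ∈ s, ∀ y ∈ s, δ * (y - x) ≤ 1 + x * y)
    (hneg : ∃ x ∈ s, x < 0) (hpos : ∃ x ∈ s, 0 < x) : ∏ x ∈ s, x < 4 := by
  obtain ⟨a, ha, hmin⟩ := s.exists_min_image id (hneg.imp fun _ ↦ And.left)
  obtain ⟨b, hb, hmax⟩ := s.exists_max_image id (hpos.imp fun _ ↦ And.left)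
  have ha0 : a < 0 := hneg.elim fun x hx ↦ (hmin x hx.1).trans_lt hx.2
  have hb0 : 0 < b := hpos.elim fun x hx ↦ hx.2.trans_le (hmax x hx.1)
  rw [prod_eq_neg_one_pow_mul_prod_neg_mul_prod]
  rcases (s.filter (· < 0)).card.even_or_odd with heven | hodd
  · have hcard_split := s.card_filter_add_card_filter_not (· < 0)
    have hcard_neg : 0 < (s.filter (· < 0)).card :=
      Finset.card_pos.2 ⟨a, Finset.mem_filter.2 ⟨ha, ha0⟩⟩
    have hcard_pos : 0 < (s.filter (¬· < 0)).card :=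
      Finset.card_pos.2 ⟨b, Finset.mem_filter.2 ⟨hb, hb0.not_gt⟩⟩
    obtain ⟨i, hi⟩ : ∃ i, (s.filter (· < 0)).card = 2 * (i + 1) :=
      ⟨(s.filter (· < 0)).card / 2 - 1, by grind⟩
    obtain ⟨j, hj⟩ : ∃ j, (s.filter (¬· < 0)).card = 2 * (j + 1) := ⟨n - i, by lia⟩
    have hlt : (-a) ^ (i + 1) * b ^ (j + 1) < 2 :=
      pow_succ_mul_pow_succ_lt_two (neg_pos.2 ha0) hb0 hδ hn (by linarith [hs a ha b hb]) (by lia)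
    have hnonneg : 0 ≤ (-a) ^ (i + 1) * b ^ (j + 1) :=
      mul_nonneg (pow_nonneg (neg_nonneg.2 ha0.le) _) (pow_nonneg hb0.le _)
    rw [heven.neg_one_pow, one_mul]
    calc _ ≤ (-a) ^ (2 * (i + 1)) * b ^ (2 * (j + 1)) :=
          hi ▸ hj ▸ prod_neg_mul_prod_le_pow_mul_pow (by simpa using hmin) hmax
      _ = ((-a) ^ (i + 1) * b ^ (j + 1)) ^ 2 := by ring
      _ < 4 := by nlinarith
  · rw [hodd.neg_one_pow]
    linarith [prod_neg_mul_prod_nonneg s]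

lemma cos_mul_tan_sub_tan_le {a b ℓ : ℝ} (ha : 0 < cos a) (hb : 0 < cos b) (hℓ : 0 ≤ cos ℓ)
    (hab : cos ℓ ≤ cos (a - b)) : cos ℓ * (tan a - tan b) ≤ 1 + tan b * tan a := by
  have hsin : cos ℓ * sin (a - b) ≤ cos (a - b) :=
    (mul_le_of_le_one_right hℓ (sin_le_one _)).trans hab
  rw [sin_sub, cos_sub] at hsin
  rw [tan_eq_sin_div_cos, tan_eq_sin_div_cos]
  field_simp
  linarith

end ProductBound

/-! ### Trigonometric polynomials -/

section BinaryForm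

variable {R : Type*} [CommSemiring R]

/-- The binary form `∑ aⱼ vʲ w^{m-j}` of degree `m`. -/
def binaryForm (m : ℕ) (a : ℕ → R) (v w : R) : R :=
  ∑ j ∈ Finset.range (m + 1), a j * v ^ j * w ^ (m - j)

lemma binaryForm_mul_mul (m : ℕ) (a : ℕ → R) (r v w : R) :
    binaryForm m a (r * v) (r * w) = r ^ m * binaryForm m a v w := by
  rw [binaryForm, binaryForm, Finset.mul_sum]
  refine Finset.sum_congr rfl fun j hj ↦ ?_
  rw [← Nat.add_sub_of_le (Finset.mem_range_succ_iff.1 hj), Nat.add_sub_cancel_left]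
  ring

lemma exists_polynomial_binaryForm (m : ℕ) (a : ℕ → R) (v v' w w' : R) :
    ∃ P : R[X], P.natDegree ≤ m ∧ P.coeff m = binaryForm m a v' w' ∧
      ∀ u, P.eval u = binaryForm m a (v + v' * u) (w + w' * u) := by
  have hpow : ∀ (p r : R) (j : ℕ), ((C p * X + C r) ^ j).natDegree ≤ j := fun p r j ↦
    (natDegree_pow_le_of_le j natDegree_linear_le).trans_eq (mul_one j)
  have hcoeff : ∀ (p r : R) (j : ℕ), ((C p * X + C r) ^ j).coeff j = p ^ j := fun p r j ↦ by
    simpa using coeff_pow_of_natDegree_le (m := j) (natDegree_linear_le (a := p) (b := r))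
  refine ⟨∑ j ∈ Finset.range (m + 1),
    C (a j) * (C v' * X + C v) ^ j * (C w' * X + C w) ^ (m - j),
    natDegree_sum_le_of_forall_le _ _ fun j hj ↦ ?_, ?_, fun u ↦ ?_⟩
  · refine (natDegree_mul_le_of_le ((natDegree_C_mul_le _ _).trans (hpow _ _ _))
      (hpow _ _ _)).trans_eq (Nat.add_sub_of_le (Finset.mem_range_succ_iff.1 hj))
  · rw [finsetSum_coeff]
    refine Finset.sum_congr rfl fun j hj ↦ ?_
    conv_lhs => rw [← Nat.add_sub_of_le (Finset.mem_range_succ_iff.1 hj)]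
    rw [Nat.add_sub_cancel_left, coeff_mul_add_eq_of_natDegree_le
      ((natDegree_C_mul_le _ _).trans (hpow _ _ _)) (hpow _ _ _), coeff_C_mul, hcoeff, hcoeff]
  · simp [eval_finsetSum, binaryForm, add_comm]

end BinaryForm

section TrigForm

open Complex (I)

/-- The real trigonometric polynomial `Re ∑ aⱼ e^{i(2j-m)t}`, whose frequencies all have the parity
of its degree `m`. -/
noncomputable def trigForm (m : ℕ) (a : ℕ → ℂ) (t : ℝ) : ℝ :=
  (binaryForm m a (Complex.exp (I * t)) (Complex.exp (-(I * t)))).re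

lemma exists_real_polynomial_re (P : ℂ[X]) :
    ∃ q : ℝ[X], (∀ i, q.coeff i = (P.coeff i).re) ∧ ∀ u : ℝ, q.eval u = (P.eval (u : ℂ)).re := by
  refine ⟨∑ i ∈ Finset.range (P.natDegree + 1), monomial i (P.coeff i).re, fun i ↦ ?_, fun u ↦ ?_⟩
  · simp only [finsetSum_coeff, coeff_monomial, Finset.sum_ite_eq', Finset.mem_range,
      Nat.lt_succ_iff, ite_eq_left_iff, not_le]
    intro hi
    rw [coeff_eq_zero_of_natDegree_lt hi, Complex.zero_re]
  · rw [eval_finsetSum, eval_eq_sum_range, Complex.re_sum]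
    refine Finset.sum_congr rfl fun i _ ↦ ?_
    rw [eval_monomial, ← Complex.ofReal_pow, Complex.re_mul_ofReal]

lemma exp_I_mul_eq_cos_mul {x : ℝ} (hx : cos x ≠ 0) :
    Complex.exp (I * x) = cos x * (1 + I * tan x) := by
  rw [mul_comm I, Complex.exp_mul_I, ← Complex.ofReal_cos, ← Complex.ofReal_sin,
    ← tan_mul_cos hx]
  push_cast
  ring

lemma exists_polynomial_trigForm (m : ℕ) (a : ℕ → ℂ) (y : ℝ) :
    ∃ q : ℝ[X], q.natDegree ≤ m ∧ trigForm m a (y + π / 2) = q.coeff m ∧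
      ∀ x, cos x ≠ 0 → trigForm m a (y + x) = cos x ^ m * q.eval (tan x) := by
  set α := Complex.exp (I * y) with hα
  set β := Complex.exp (-(I * y)) with hβ
  have hshift : ∀ x : ℝ, trigForm m a (y + x) =
      (binaryForm m a (α * Complex.exp (I * x)) (β * Complex.exp (-(I * x)))).re := fun x ↦ by
    rw [trigForm, hα, hβ, ← Complex.exp_add, ← Complex.exp_add]
    push_cast
    ring_nf
  obtain ⟨P, hdeg, hcoeff, heval⟩ :=
    exists_polynomial_binaryForm m a α (α * I) β (β * -I)
  obtain ⟨q, hqcoeff, hqeval⟩ := exists_real_polynomial_re P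
  refine ⟨q, natDegree_le_iff_coeff_eq_zero.2 fun i hi ↦ ?_, ?_, fun x hx ↦ ?_⟩
  · rw [hqcoeff, coeff_eq_zero_of_natDegree_lt (hdeg.trans_lt hi), Complex.zero_re]
  · have hI : Complex.exp (I * (π / 2 : ℝ)) = I := by
      rw [mul_comm]; push_cast; exact Complex.exp_pi_div_two_mul_I
    rw [hshift, hqcoeff, hcoeff, Complex.exp_neg, hI, Complex.inv_I]
  · have hexp_neg : Complex.exp (-(I * x)) = cos x * (1 - I * tan x) := by
      simpa [sub_eq_add_neg] using exp_I_mul_eq_cos_mul (x := -x) (by simpa using hx)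
    rw [hshift, exp_I_mul_eq_cos_mul hx, hexp_neg, mul_left_comm, mul_left_comm β,
      binaryForm_mul_mul, hqeval, heval, ← Complex.ofReal_pow, Complex.re_ofReal_mul]
    ring_nf

lemma antiperiodic_trigForm {m : ℕ} (hm : Odd m) (a : ℕ → ℂ) :
    Function.Antiperiodic (trigForm m a) π := by
  intro t
  obtain ⟨q, -, -, hq⟩ := exists_polynomial_trigForm m a t
  have hzero := hq 0 (by simp)
  rw [add_zero, cos_zero, one_pow, one_mul, tan_zero] at hzero
  rw [hq π (by simp), cos_pi, hm.neg_one_pow, tan_pi, hzero, neg_one_mul]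

end TrigForm

/-! ### Trigonometric polynomials equal to `1` at many points of an arc -/

section Nodes

variable {n : ℕ} {a : ℕ → ℂ} {s : Finset ℝ} {y : ℝ}

lemma card_image_tan_sub (hy : ∀ t ∈ s, t - y ∈ Set.Ioo (-(π / 2)) (π / 2)) :
    (s.image fun t ↦ tan (t - y)).card = s.card :=
  Finset.card_image_of_injOn fun _ ht _ ht' h ↦
    sub_left_injective (injOn_tan (hy _ ht) (hy _ ht') h)

lemma eval_tan_sub_eq_secPow {m : ℕ} {q : ℝ[X]}
    (hq : ∀ x, cos x ≠ 0 → trigForm m a (y + x) = cos x ^ m * q.eval (tan x))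
    (hs : ∀ t ∈ s, trigForm m a t = 1) (hy : ∀ t ∈ s, t - y ∈ Set.Ioo (-(π / 2)) (π / 2)) :
    ∀ x ∈ s.image fun t ↦ tan (t - y), q.eval x = secPow m x := by
  refine Finset.forall_mem_image.2 fun t ht ↦ ?_
  have hcos := cos_pos_of_mem_Ioo (hy t ht)
  have hqt := hq (t - y) hcos.ne'
  rw [add_sub_cancel, hs t ht] at hqt
  rw [secPow_tan _ hcos, zpow_natCast]
  exact (inv_eq_of_mul_eq_one_right hqt.symm).symm

lemma abs_trigForm_add_pi_div_two_lt_one (hcard : 2 * n + 1 < s.card)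
    (hs : ∀ t ∈ s, trigForm (2 * n + 1) a t = 1)
    (hy : ∀ t ∈ s, t - y ∈ Set.Ioo (-(π / 2)) (π / 2)) :
    |trigForm (2 * n + 1) a (y + π / 2)| < 1 := by
  obtain ⟨q, hdeg, hcoeff, hq⟩ := exists_polynomial_trigForm (2 * n + 1) a y
  rw [hcoeff]
  refine abs_coeff_lt_one_of_eval_eq_secPow hdeg (hcard.trans_eq (card_image_tan_sub hy).symm) ?_
  exact_mod_cast eval_tan_sub_eq_secPow hq hs hy

lemma not_hasDerivAt_trigForm_zero (hcard : 2 * n + 1 < s.card)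
    (hs : ∀ t ∈ s, trigForm (2 * n + 1) a t = 1)
    (hy : ∀ t ∈ s, t - y ∈ Set.Ioo (-(π / 2)) (π / 2)) (hys : y ∈ s) :
    ¬HasDerivAt (trigForm (2 * n + 1) a) 0 y := by
  intro hderiv
  obtain ⟨q, hdeg, -, hq⟩ := exists_polynomial_trigForm (2 * n + 1) a y
  have hqs := eval_tan_sub_eq_secPow hq hs hy
  refine deriv_secPow_sub_eval_ne_zero hdeg (hcard.trans_eq (card_image_tan_sub hy).symm)
    (mod_cast hqs) (Finset.mem_image.2 ⟨y, hys, by simp⟩ : (0 : ℝ) ∈ _) ?_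
  have hsub : (fun u ↦ secPow (2 * n + 1) u - q.eval u) =
      fun u ↦ secPow (2 * n + 1) u * (1 - trigForm (2 * n + 1) a (y + arctan u)) := by
    ext u
    have hcos := cos_arctan_pos u
    rw [hq _ hcos.ne', tan_arctan, secPow_eq_cos_arctan_zpow, zpow_neg]
    norm_cast
    field
  have hform : HasDerivAt (fun u ↦ trigForm (2 * n + 1) a (y + arctan u)) 0 0 := by
    refine (HasDerivAt.comp (0 : ℝ) (h₂ := trigForm (2 * n + 1) a) (h₂' := 0) ?_
      ((hasDerivAt_arctan 0).const_add y)).congr_deriv (zero_mul _)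
    rwa [arctan_zero, add_zero]
  rw [hsub]
  refine ((hasDerivAt_secPow (2 * n + 1) 0).mul (hform.const_sub 1)).deriv.trans ?_
  rw [arctan_zero, add_zero, hs y hys]
  ring

lemma abs_eval_zero_ne_one_of_eval_eq_secPow {q : ℝ[X]} {x : Finset ℝ} {δ : ℝ}
    (hdeg : q.natDegree ≤ 2 * n + 3) (hcard : x.card = 2 * (n + 2)) (hδ : 0 < δ)
    (hn : (n : ℝ) ^ n ≤ 2 * (n + 1) ^ (n + 1) * δ ^ n)
    (hq : ∀ u ∈ x, q.eval u = secPow (2 * n + 3) u)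
    (hx : ∀ u ∈ x, ∀ v ∈ x, δ * (v - u) ≤ 1 + u * v)
    (hneg : ∃ u ∈ x, u < 0) (hpos : ∃ u ∈ x, 0 < u) (hx0 : 0 ∉ x) : |q.eval 0| ≠ 1 := by
  obtain ⟨κ, ⟨hκ, hκ_le⟩, hκx⟩ := exists_one_sub_eval_zero_eq_mul_prod (n := n + 1) hdeg
    (by lia) (by simpa [mul_add, add_assoc] using hq) hx0
  have hprod : ∏ u ∈ x, u < 4 := prod_lt_four hcard hδ hn hx hneg hpos
  have hprod_ne : ∏ u ∈ x, u ≠ 0 :=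
    Finset.prod_ne_zero_iff.2 fun u hu ↦ ne_of_mem_of_not_mem hu hx0
  rw [Ne, abs_eq zero_le_one]
  rintro (h | h) <;> rw [h] at hκx
  · exact mul_ne_zero hκ.ne' hprod_ne (by linarith)
  · nlinarith

lemma abs_trigForm_ne_one_of_between {c ℓ : ℝ} (hcard : s.card = 2 * (n + 2)) (hℓ : ℓ < π / 2)
    (hcos : (n : ℝ) ^ n ≤ 2 * (n + 1) ^ (n + 1) * cos ℓ ^ n)
    (hs : ∀ t ∈ s, trigForm (2 * n + 3) a t = 1) (hsc : ∀ t ∈ s, t ∈ Set.Icc c (c + ℓ))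
    (hlt : ∃ t ∈ s, t < y) (hgt : ∃ t ∈ s, y < t) (hys : y ∉ s) :
    |trigForm (2 * n + 3) a y| ≠ 1 := by
  obtain ⟨t₀, ht₀, ht₀y⟩ := hlt
  obtain ⟨t₁, ht₁, hyt₁⟩ := hgt
  have hy : ∀ t ∈ s, t - y ∈ Set.Ioo (-(π / 2)) (π / 2) := fun t ht ↦
    ⟨by linarith [(hsc t ht).1, (hsc t₁ ht₁).2], by linarith [(hsc t ht).2, (hsc t₀ ht₀).1]⟩
  have hcosℓ : 0 < cos ℓ :=
    cos_pos_of_mem_Ioo ⟨by linarith [(hsc t₀ ht₀).1, (hsc t₀ ht₀).2, pi_pos], hℓ⟩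
  have hdist : ∀ t ∈ s, ∀ t' ∈ s, cos ℓ ≤ cos (t - t') := fun t ht t' ht' ↦ by
    rw [← cos_abs (t - t')]
    refine cos_le_cos_of_nonneg_of_le_pi (abs_nonneg _) (by linarith [pi_pos]) (abs_le.2 ⟨?_, ?_⟩)
    · linarith [(hsc t ht).1, (hsc t' ht').2]
    · linarith [(hsc t ht).2, (hsc t' ht').1]
  have htan_neg : ∀ t ∈ s, t < y → tan (t - y) < 0 := fun t ht hty ↦
    tan_neg_of_neg_of_pi_div_two_lt (sub_neg.2 hty) (hy t ht).1
  have htan_pos : ∀ t ∈ s, y < t → 0 < tan (t - y) := fun t ht hyt ↦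
    tan_pos_of_pos_of_lt_pi_div_two (sub_pos.2 hyt) (hy t ht).2
  obtain ⟨q, hdeg, -, hq⟩ := exists_polynomial_trigForm (2 * n + 3) a y
  have hqy : trigForm (2 * n + 3) a y = q.eval 0 := by simpa using hq 0 (by simp)
  rw [hqy]
  refine abs_eval_zero_ne_one_of_eval_eq_secPow hdeg ((card_image_tan_sub hy).trans hcard) hcosℓ
    hcos (mod_cast eval_tan_sub_eq_secPow hq hs hy) ?_
    ⟨_, Finset.mem_image_of_mem _ ht₀, htan_neg t₀ ht₀ ht₀y⟩
    ⟨_, Finset.mem_image_of_mem _ ht₁, htan_pos t₁ ht₁ hyt₁⟩ fun h0 ↦ ?_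
  · simp only [Finset.forall_mem_image]
    exact fun t ht t' ht' ↦ cos_mul_tan_sub_tan_le (cos_pos_of_mem_Ioo (hy t' ht'))
      (cos_pos_of_mem_Ioo (hy t ht)) hcosℓ.le (by simpa using hdist t' ht' t ht)
  · obtain ⟨t, ht, ht0⟩ := Finset.mem_image.1 h0
    rcases lt_trichotomy t y with hty | rfl | hyt
    exacts [(htan_neg t ht hty).ne ht0, hys ht, (htan_pos t ht hyt).ne' ht0]

lemma mem_of_abs_trigForm_eq_one {c ℓ : ℝ} (hcard : s.card = 2 * (n + 2)) (hℓ : ℓ < π / 2)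
    (hcos : (n : ℝ) ^ n ≤ 2 * (n + 1) ^ (n + 1) * cos ℓ ^ n)
    (hs : ∀ t ∈ s, trigForm (2 * n + 3) a t = 1) (hsc : ∀ t ∈ s, t ∈ Set.Icc c (c + ℓ))
    (hy : y ∈ Set.Ico c (c + π)) (hay : |trigForm (2 * n + 3) a y| = 1) : y ∈ s := by
  by_contra hys
  by_cases! hlt : ∃ t ∈ s, t < y
  · by_cases! hgt : ∃ t ∈ s, y < t
    · exact abs_trigForm_ne_one_of_between hcard hℓ hcos hs hsc hlt hgt hys hay
    · refine (abs_trigForm_add_pi_div_two_lt_one (n := n + 1) (a := a) (y := y - π / 2)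
        (by lia) hs fun t ht ↦ ?_).ne ?_
      · have := (hgt t ht).lt_of_ne (ne_of_mem_of_not_mem ht hys)
        exact ⟨by linarith [(hsc t ht).1, hy.2], by linarith⟩
      · rwa [sub_add_cancel]
  · refine (abs_trigForm_add_pi_div_two_lt_one (n := n + 1) (a := a) (y := y + π / 2)
      (by lia) hs fun t ht ↦ ?_).ne ?_
    · have := (hlt t ht).lt_of_ne' (ne_of_mem_of_not_mem ht hys)
      exact ⟨by linarith, by linarith [(hsc t ht).2, hy.1]⟩
    · rwa [add_assoc, add_halves, antiperiodic_trigForm ⟨n + 1, by ring⟩, abs_neg]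

lemma exists_mem_eq_add_of_trigForm_eq_one {c ℓ : ℝ} (hcard : s.card = 2 * (n + 2))
    (hℓ : ℓ < π / 2) (hcos : (n : ℝ) ^ n ≤ 2 * (n + 1) ^ (n + 1) * cos ℓ ^ n)
    (hs : ∀ t ∈ s, trigForm (2 * n + 3) a t = 1) (hsc : ∀ t ∈ s, t ∈ Set.Icc c (c + ℓ))
    (hay : trigForm (2 * n + 3) a y = 1) : ∃ k : ℤ, y + k • (2 * π) ∈ s := by
  have hanti := antiperiodic_trigForm (m := 2 * n + 3) ⟨n + 1, by ring⟩ a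
  obtain ⟨k, hk, -⟩ := existsUnique_add_zsmul_mem_Ico two_pi_pos y c
  have hyk : trigForm (2 * n + 3) a (y + k • (2 * π)) = 1 :=
    (hanti.periodic_two_mul.zsmul k y).trans hay
  refine ⟨k, ?_⟩
  rcases lt_or_ge (y + k • (2 * π)) (c + π) with hlt | hge
  · exact mem_of_abs_trigForm_eq_one hcard hℓ hcos hs hsc ⟨hk.1, hlt⟩ (by rw [hyk, abs_one])
  · have hneg := hanti.sub_eq (y + k • (2 * π))
    rw [hyk] at hneg
    have hmem := mem_of_abs_trigForm_eq_one hcard hℓ hcos hs hsc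
      (y := y + k • (2 * π) - π) ⟨by linarith, by linarith [hk.2]⟩ (by rw [hneg, abs_neg, abs_one])
    linarith [hs _ hmem]

end Nodes

/-! ### Raked polynomials -/

/-- `D` has degree at most `2m` and its only possibly nonzero odd-degree coefficient is the middle
one, that of `X ^ m`. -/
def IsRaked {R : Type*} [Semiring R] (m : ℕ) (D : R[X]) : Prop :=
  D.natDegree ≤ 2 * m ∧ ∀ i, Odd i → i ≠ m → D.coeff i = 0

/-- The coefficients of the trigonometric polynomial that equals `1 - Re (D(z) / (c zᵐ))` at
`z = e^{it}`, where `c` is the middle coefficient of `D`. -/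
noncomputable def quotientCoeff (m : ℕ) (D : ℂ[X]) (j : ℕ) : ℂ :=
  -(D.coeff (2 * j) / D.coeff m)

lemma injOn_exp_I_mul_sq {c ℓ : ℝ} (hℓ : ℓ < π) :
    Set.InjOn (fun t : ℝ ↦ Complex.exp (Complex.I * t) ^ 2) (Set.Icc c (c + ℓ)) := by
  intro t ht t' ht' h
  simp only [← Complex.exp_nat_mul, Complex.exp_eq_exp_iff_exists_int] at h
  obtain ⟨k, hk⟩ := h
  have hkπ : t - t' = k * π := by
    have hkC : ((t - t' : ℝ) : ℂ) = (k * π : ℝ) := by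
      refine mul_left_cancel₀ (mul_ne_zero two_ne_zero Complex.I_ne_zero) ?_
      push_cast at hk ⊢
      linear_combination hk
    exact Complex.ofReal_injective hkC
  have hsin : sin (t - t') = 0 := by rw [hkπ, sin_int_mul_pi]
  exact sub_eq_zero.1 ((sin_eq_zero_iff_of_lt_of_lt (by linarith [ht.1, ht'.2])
    (by linarith [ht.2, ht'.1])).1 hsin)

namespace IsRaked

open Complex (I)

section CommRing

variable {R : Type*} [CommRing R] {m : ℕ} {D : R[X]}

lemma eq_expand_contract_add (hm : Odd m) (hD : IsRaked m D) :
    D = expand R 2 (contract 2 D) + C (D.coeff m) * X ^ m := by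
  ext i
  rw [coeff_add, coeff_expand two_pos, coeff_contract two_ne_zero, coeff_C_mul_X_pow]
  split_ifs with hi him him
  · exact absurd hi (by grind)
  · rw [Nat.div_mul_cancel hi, add_zero]
  · rw [him, zero_add]
  · rw [hD.2 i (by grind) him, add_zero]

lemma natDegree_contract_le (hD : IsRaked m D) : (contract 2 D).natDegree ≤ m := by
  refine natDegree_le_iff_coeff_eq_zero.2 fun i hi ↦ ?_
  rw [coeff_contract two_ne_zero, coeff_eq_zero_of_natDegree_lt (hD.1.trans_lt (by lia))]

lemma coeff_ne_zero [IsDomain R] (hm : Odd m) (hD : IsRaked m D) (hD0 : D ≠ 0) {ι : Type*}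
    {s : Finset ι} {x : ι → R} (hcard : m < s.card) (hinj : Set.InjOn (fun i ↦ x i ^ 2) s)
    (hs : ∀ i ∈ s, D.eval (x i) = 0) : D.coeff m ≠ 0 := by
  classical
  intro hc
  have hexpand := hD.eq_expand_contract_add hm
  rw [hc, C_0, zero_mul, add_zero] at hexpand
  have hzero : contract 2 D = 0 := by
    refine eq_zero_of_natDegree_lt_card_of_eval_eq_zero' _ (s.image fun i ↦ x i ^ 2)
      (Finset.forall_mem_image.2 fun i hi ↦ ?_)
      (hD.natDegree_contract_le.trans_lt (by rwa [Finset.card_image_of_injOn hinj]))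
    rw [← expand_eval, ← hexpand, hs i hi]
  exact hD0 (by rw [hexpand, hzero, map_zero])

end CommRing

variable {m : ℕ} {D : ℂ[X]}

lemma trigForm_eq (hm : Odd m) (hD : IsRaked m D) (hc : D.coeff m ≠ 0) (t : ℝ) :
    trigForm m (quotientCoeff m D) t =
      (1 - D.eval (Complex.exp (I * t)) / (D.coeff m * Complex.exp (I * t) ^ m)).re := by
  have hz : Complex.exp (I * t) ≠ 0 := Complex.exp_ne_zero _
  have heval : D.eval (Complex.exp (I * t)) =
      (∑ j ∈ Finset.range (m + 1), D.coeff (2 * j) * Complex.exp (I * t) ^ (2 * j)) +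
        D.coeff m * Complex.exp (I * t) ^ m := by
    conv_lhs => rw [hD.eq_expand_contract_add hm]
    rw [eval_add, expand_eval,
      eval_eq_sum_range' (Nat.lt_succ_of_le hD.natDegree_contract_le)]
    simp only [coeff_contract two_ne_zero, mul_comm _ 2, pow_mul, eval_mul, eval_C, eval_pow,
      eval_X]
  rw [trigForm, binaryForm, heval, add_div, div_self (by positivity), Finset.sum_div,
    sub_add_cancel_right, ← Finset.sum_neg_distrib]
  congr 1
  refine Finset.sum_congr rfl fun j hj ↦ ?_
  obtain ⟨i, rfl⟩ := Nat.exists_eq_add_of_le (Finset.mem_range_succ_iff.1 hj)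
  rw [quotientCoeff, Complex.exp_neg, Nat.add_sub_cancel_left, inv_pow]
  field_simp
  ring

lemma trigForm_eq_one (hm : Odd m) (hD : IsRaked m D) (hc : D.coeff m ≠ 0) {t : ℝ}
    (ht : D.eval (Complex.exp (I * t)) = 0) :
    trigForm m (quotientCoeff m D) t = 1 := by
  rw [hD.trigForm_eq hm hc, ht, zero_div, sub_zero, Complex.one_re]

lemma hasDerivAt_trigForm_zero (hm : Odd m) (hD : IsRaked m D) (hc : D.coeff m ≠ 0) {t : ℝ}
    (ht : D.eval (Complex.exp (I * t)) = 0) (ht' : D.derivative.eval (Complex.exp (I * t)) = 0) :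
    HasDerivAt (trigForm m (quotientCoeff m D)) 0 t := by
  have hexp : HasDerivAt (fun z : ℂ ↦ Complex.exp (I * z)) (Complex.exp (I * t) * I) t :=
    (hasDerivAt_const_mul I).cexp
  have hnum : HasDerivAt (fun z : ℂ ↦ D.eval (Complex.exp (I * z))) 0 t :=
    ((D.hasDerivAt _).comp (t : ℂ) hexp).congr_deriv (by rw [ht', zero_mul])
  have hquot := (hnum.div ((hexp.pow m).const_mul (D.coeff m)) (by simp [hc])).const_sub 1
  rw [funext (hD.trigForm_eq hm hc)]
  exact hquot.real_of_complex.congr_deriv (by simp [ht])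

section Arc

variable {n : ℕ} {s : Finset ℝ} {c ℓ : ℝ}

lemma coeff_ne_zero_of_arc (hD : IsRaked (2 * n + 3) D) (hD0 : D ≠ 0)
    (hcard : s.card = 2 * (n + 2)) (hℓ : ℓ < π / 2) (hsc : ∀ t ∈ s, t ∈ Set.Icc c (c + ℓ))
    (hs : ∀ t ∈ s, D.eval (Complex.exp (I * t)) = 0) : D.coeff (2 * n + 3) ≠ 0 :=
  hD.coeff_ne_zero ⟨n + 1, by ring⟩ hD0 (by lia)
    ((injOn_exp_I_mul_sq (by linarith [pi_pos])).mono hsc) hs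

lemma exists_exp_eq_of_eval_eq_zero (hD : IsRaked (2 * n + 3) D) (hD0 : D ≠ 0)
    (hcard : s.card = 2 * (n + 2)) (hℓ : ℓ < π / 2)
    (hcos : (n : ℝ) ^ n ≤ 2 * (n + 1) ^ (n + 1) * cos ℓ ^ n)
    (hsc : ∀ t ∈ s, t ∈ Set.Icc c (c + ℓ)) (hs : ∀ t ∈ s, D.eval (Complex.exp (I * t)) = 0)
    {y : ℝ} (hy : D.eval (Complex.exp (I * y)) = 0) :
    ∃ t ∈ s, Complex.exp (I * y) = Complex.exp (I * t) := by
  have hm : Odd (2 * n + 3) := ⟨n + 1, by ring⟩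
  have hc := hD.coeff_ne_zero_of_arc hD0 hcard hℓ hsc hs
  obtain ⟨k, hk⟩ := exists_mem_eq_add_of_trigForm_eq_one hcard hℓ hcos
    (fun t ht ↦ hD.trigForm_eq_one hm hc (hs t ht)) hsc (hD.trigForm_eq_one hm hc hy)
  refine ⟨_, hk, Complex.exp_eq_exp_iff_exists_int.2 ⟨-k, ?_⟩⟩
  push_cast [zsmul_eq_mul]
  ring

lemma derivative_eval_ne_zero (hD : IsRaked (2 * n + 3) D) (hD0 : D ≠ 0)
    (hcard : s.card = 2 * (n + 2)) (hℓ : ℓ < π / 2)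
    (hsc : ∀ t ∈ s, t ∈ Set.Icc c (c + ℓ)) (hs : ∀ t ∈ s, D.eval (Complex.exp (I * t)) = 0)
    {y : ℝ} (hy : y ∈ s) : D.derivative.eval (Complex.exp (I * y)) ≠ 0 := by
  have hm : Odd (2 * n + 3) := ⟨n + 1, by ring⟩
  have hc := hD.coeff_ne_zero_of_arc hD0 hcard hℓ hsc hs
  refine fun hderiv ↦ not_hasDerivAt_trigForm_zero (n := n + 1) (by lia)
    (fun t ht ↦ hD.trigForm_eq_one hm hc (hs t ht)) (fun t ht ↦ ?_) hy
    (hD.hasDerivAt_trigForm_zero hm hc (hs y hy) hderiv)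
  exact ⟨by linarith [(hsc t ht).1, (hsc y hy).2], by linarith [(hsc t ht).2, (hsc y hy).1]⟩

end Arc

end IsRaked

lemma RakedSelfInversive.isRaked {k : ℕ} {D : ℂ[X]} (hD : RakedSelfInversive k D) :
    IsRaked (2 * k - 1) D :=
  ⟨by rw [hD.1]; lia, hD.2.2.1⟩

theorem stmt_19_general {ι : Type*} [Fintype ι] (n : ℕ) (hι : Fintype.card ι = 2 * (n + 2))
    {ℓ : ℝ} (hℓ : ℓ < π / 2) (hcos : (n : ℝ) ^ n ≤ 2 * (n + 1) ^ (n + 1) * cos ℓ ^ n)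
    (z : ι → ℂ) (hinj : Function.Injective z)
    (harc : ∃ c : ℝ, ∀ i, ∃ θ ∈ Set.Icc c (c + ℓ), z i = Complex.exp (Complex.I * (θ : ℂ)))
    (D : ℂ[X]) (hD0 : D ≠ 0) (hD : IsRaked (2 * n + 3) D) (hroots : ∀ i, D.eval (z i) = 0) :
    ∀ w ∈ D.roots - (Finset.univ.val.map z), ‖w‖ ≠ 1 := by
  classical
  obtain ⟨c, harc⟩ := harc
  choose θ hθ hz using harc
  set s := Finset.univ.image θ with hs
  have hcard : s.card = 2 * (n + 2) := by
    rw [Finset.card_image_of_injective _ fun i j h ↦ hinj (by rw [hz, hz, h]), Finset.card_univ, hι]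
  have hsc : ∀ t ∈ s, t ∈ Set.Icc c (c + ℓ) := by simpa [hs] using hθ
  have hs0 : ∀ t ∈ s, D.eval (Complex.exp (Complex.I * t)) = 0 := by simpa [hs, ← hz] using hroots
  intro w hw hnorm
  rw [← Multiset.count_pos, Multiset.count_sub, tsub_pos_iff_lt, count_roots] at hw
  obtain ⟨y, rfl⟩ : ∃ y : ℝ, Complex.exp (Complex.I * y) = w := by
    simpa only [mul_comm] using (Complex.norm_eq_one_iff w).1 hnorm
  have hroot : D.IsRoot (Complex.exp (Complex.I * y)) :=
    (rootMultiplicity_pos hD0).1 (Nat.zero_lt_of_lt hw)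
  obtain ⟨t, ht, hyt⟩ := hD.exists_exp_eq_of_eval_eq_zero hD0 hcard hℓ hcos hsc hs0 hroot
  obtain ⟨i, -, rfl⟩ := Finset.mem_image.1 ht
  rw [hyt, ← hz, Multiset.count_eq_one_of_mem (Finset.univ.nodup.map hinj) (by simp),
    one_lt_rootMultiplicity_iff_isRoot hD0] at hw
  exact hD.derivative_eval_ne_zero hD0 hcard hℓ hsc hs0 ht (hz i ▸ hw.2)

/-- Section 7.2: if `z₁, …, z₆` are distinct points of modulus `1` lying on an arc of
the unit circle of length at most `arccos(1/8)` and `D` is a raked self-inversive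
polynomial of degree `10` (the case `k = 3`) vanishing at each `zⱼ`, then none of the
remaining four roots of `D` (with multiplicity) has absolute value `1`. -/
theorem stmt_19 (z : Fin 6 → ℂ) (hinj : Function.Injective z)
    (hmod : ∀ i, ‖z i‖ = 1)
    (harc : ∃ c : ℝ, ∀ i, ∃ θ ∈ Set.Icc c (c + Real.arccos (1 / 8)),
      z i = Complex.exp (Complex.I * (θ : ℂ)))
    (D : Polynomial ℂ) (hD : RakedSelfInversive 3 D)
    (hroots : ∀ i, D.eval (z i) = 0) :
    ∀ w ∈ D.roots - (Finset.univ.val.map z), ‖w‖ ≠ 1 :=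
  stmt_19_general 1 rfl (arccos_lt_pi_div_two.2 (by norm_num))
    (by norm_num [cos_arccos]) z hinj harc D hD.2.1 hD.isRaked hroots
end
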